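/- Let δ > 0 and N > 0. There is a constant C = C(N, δ, ω, ω₀) such that for all real Q ≥ 1, all q ∈ ℕ, all a ∈ ℤ² with gcd(a₁,a₂,q) = 1 and all w ∈ ℝ² the following holds: if μ_{M(w)}(Λ(a,q)) ≥ Q^{δ}( q Q^{−1} + |w| q Q^{1/2} ), then | Σ_{r ∈ Λ(a,q), r ≠ 0} ω(|r|/Q^{1/2}) p_{2,r,k(r),q}(w) − (c Q^{1/2}/q) ∫_{ℝ²} |t|^{−1} ω(|t|/Q^{1/2}) ω̂₀( (Q^{3/2}/|t|) (w·t^⊥) ) dt | ≤ C Q^{−N}, where k(r) = gcd(r₁,r₂)/gcd(r₁,r₂,q) and ω̂₀(t) = ∫_ℝ ω₀(x) e(−xt) dx. -/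

import Mathlib

open MeasureTheory Real Matrix Finset

noncomputable section

/-- `e(x) = exp(2πix)`. -/
def e2pi (x : ℝ) : ℂ := Complex.exp (2 * Real.pi * Complex.I * x)

/-- Euclidean norm on `ℝ²`. -/
def nrm2 (x : ℝ × ℝ) : ℝ := Real.sqrt (x.1 ^ 2 + x.2 ^ 2)

/-- Dot product on `ℝ²`. -/
def dot2 (x y : ℝ × ℝ) : ℝ := x.1 * y.1 + x.2 * y.2

/-- `x^⊥ = (x₂, -x₁)`. -/
def perp2 (x : ℝ × ℝ) : ℝ × ℝ := (x.2, -x.1)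

/-- `δ_n` for `n ∈ ℤ²`. -/
def deltaInt (n : ℤ × ℤ) : ℂ := if n = 0 then 1 else 0

/-- `h(y,z) = Σ_{j ≥ 1} (1/(yj)) (ω(yj) − ω(|z|/(yj)))`. -/
def hFun (ω : ℝ → ℝ) (y z : ℝ) : ℝ :=
  ∑' j : ℕ+, (1 / (y * ((j : ℕ) : ℝ))) *
    (ω (y * ((j : ℕ) : ℝ)) - ω (|z| / (y * ((j : ℕ) : ℝ))))

/-- `c = (∫_{ℝ²} ω(|x|) dx)⁻¹`. -/
def cConst (ω : ℝ → ℝ) : ℝ := (∫ x : ℝ × ℝ, ω (nrm2 x))⁻¹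

/-- The function `p_{1,q}`. -/
def p1 (ω ω₀ : ℝ → ℝ) (Q : ℝ) (q : ℕ) (w : ℝ × ℝ) : ℂ :=
  -(cConst ω / Q : ℝ) * ∫ x : ℝ × ℝ,
    (((ω₀ (nrm2 x / Q ^ ((3 : ℝ) / 2)) *
      ∑' j : ℕ+, (1 / ((q : ℝ) * ((j : ℕ) : ℝ)) ^ 2) *
        ω (nrm2 x / (((j : ℕ) : ℝ) * (q : ℝ) * Q ^ ((1 : ℝ) / 2)))) : ℝ) : ℂ) *
      e2pi (-(dot2 w x))

/-- The function `p_{2,r,k,q}` (with `q` allowed to be a real parameter). -/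
def p2 (ω ω₀ : ℝ → ℝ) (Q : ℝ) (r : ℤ × ℤ) (k : ℕ) (q : ℝ) (w : ℝ × ℝ) : ℂ :=
  ((cConst ω / Q ^ 3 : ℝ) : ℂ) * ∫ x : ℝ × ℝ,
    (((ω₀ (nrm2 x / Q ^ ((3 : ℝ) / 2)) *
      hFun ω ((k : ℝ) * q / Q) (((r.1 : ℝ) * x.1 + (r.2 : ℝ) * x.2) / Q ^ 2)) : ℝ) : ℂ) *
      e2pi (-(dot2 w x))

/-- The lattice `Λ(a,q) = {k a + q y}` as a subset of `ℤ²`. -/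
def Lambda (a : ℤ × ℤ) (q : ℕ) : Set (ℤ × ℤ) :=
  {v | ∃ k : ℤ, ∃ y : ℤ × ℤ, v = (k * a.1 + (q : ℤ) * y.1, k * a.2 + (q : ℤ) * y.2)}

/-- `k(r) = gcd(r₁,r₂)/gcd(gcd(r₁,r₂),q)`. -/
def kOf (r : ℤ × ℤ) (q : ℕ) : ℕ := Int.gcd r.1 r.2 / Nat.gcd (Int.gcd r.1 r.2) q

/-- The function `p_{Λ(a,q)}`. -/
def pLambda (ω ω₀ : ℝ → ℝ) (Q : ℝ) (q : ℕ) (a : ℤ × ℤ) (w : ℝ × ℝ) : ℂ :=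
  p1 ω ω₀ Q q w +
    ∑' r : ℤ × ℤ,
      Set.indicator {r : ℤ × ℤ | r ∈ Lambda a q ∧ r ≠ 0}
        (fun r => ((ω (nrm2 ((r.1 : ℝ), (r.2 : ℝ)) / Q ^ ((1 : ℝ) / 2)) : ℝ) : ℂ) *
          p2 ω ω₀ Q r (kOf r q) (q : ℝ) w) r

/-- Reduced residues `a mod q` (canonical representatives) with `gcd(a₁,a₂,q)=1`. -/
def residues (q : ℕ) : Finset (ℕ × ℕ) :=
  ((Finset.range q) ×ˢ (Finset.range q)).filter (fun a => Nat.gcd (Nat.gcd a.1 a.2) q = 1)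

/-- Normalized directional derivative along `ξ`. -/
def dirDeriv (ξ : ℝ × ℝ) (f : ℝ × ℝ → ℂ) : ℝ × ℝ → ℂ :=
  fun w => fderiv ℝ f w (ξ.1 / nrm2 ξ, ξ.2 / nrm2 ξ)

/-- Fourier transform `ω̂₀(t) = ∫ ω₀(x) e(−xt) dx`. -/
def fourierW0 (ω₀ : ℝ → ℝ) (t : ℝ) : ℂ := ∫ x : ℝ, ((ω₀ x : ℝ) : ℂ) * e2pi (-(x * t))

/-- `|M(w)x|` for the 3×2 matrix `M(w)`. -/
def Mnorm (Q : ℝ) (w : ℝ × ℝ) (x : ℝ × ℝ) : ℝ :=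
  Real.sqrt (x.1 ^ 2 / Q + x.2 ^ 2 / Q + Q ^ 2 * (w.1 * x.2 - w.2 * x.1) ^ 2)

/-- `μ_{M(w)}(Λ(a,q))`: infimum of `|M(w)x|` over nonzero lattice points. -/
def muM (Q : ℝ) (w : ℝ × ℝ) (a : ℤ × ℤ) (q : ℕ) : ℝ :=
  sInf {t : ℝ | ∃ v : ℤ × ℤ, v ∈ Lambda a q ∧ v ≠ 0 ∧ t = Mnorm Q w ((v.1 : ℝ), (v.2 : ℝ))}

/-- Quadratic form attached to an integer matrix, over any commutative ring. -/
def quadEval {s : ℕ} {R : Type*} [CommRing R] (M : Matrix (Fin s) (Fin s) ℤ)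
    (x : Fin s → R) : R :=
  ∑ i, ∑ j, (M i j : R) * x i * x j

/-- `e_q(n) = exp(2πin/q)` for an integer `n`. -/
def eqc (q : ℕ) (n : ℤ) : ℂ := e2pi ((n : ℝ) / (q : ℝ))

/-- The exponential sum `D_q(u)`. -/
def Dq (s : ℕ) (M₁ M₂ : Matrix (Fin s) (Fin s) ℤ) (q : ℕ) (u : Fin s → ℤ) : ℂ :=
  ∑ a ∈ residues q, ∑ b ∈ Fintype.piFinset (fun _ : Fin s => Finset.range q),
    eqc q ((a.1 : ℤ) * quadEval M₁ (fun i => (b i : ℤ)) +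
      (a.2 : ℤ) * quadEval M₂ (fun i => (b i : ℤ)) + ∑ i, (b i : ℤ) * u i)

/-- The exponential sum `S_{q,dc}(u)`. -/
def Sq (s : ℕ) (M₁ M₂ : Matrix (Fin s) (Fin s) ℤ) (q d : ℕ) (c : ℤ × ℤ)
    (u : Fin s → ℤ) : ℂ :=
  ∑ a ∈ (residues q).filter
      (fun a => (q : ℤ) ∣ (d : ℤ) * (c.1 * (a.2 : ℤ) - c.2 * (a.1 : ℤ))),
    ∑ b ∈ Fintype.piFinset (fun _ : Fin s => Finset.range q),
      eqc q ((a.1 : ℤ) * quadEval M₁ (fun i => (b i : ℤ)) +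
        (a.2 : ℤ) * quadEval M₂ (fun i => (b i : ℤ)) + ∑ i, (b i : ℤ) * u i)

/-- The pair of quadratic forms given by `M₁, M₂` is nonsingular: at every nonzero
complex common zero the gradients (equivalently `M₁x`, `M₂x`) are linearly independent. -/
def NonsingularPair (s : ℕ) (M₁ M₂ : Matrix (Fin s) (Fin s) ℤ) : Prop :=
  ∀ x : Fin s → ℂ, x ≠ 0 →
    quadEval M₁ x = 0 → quadEval M₂ x = 0 →
    LinearIndependent ℂ
      ![(M₁.map (fun z : ℤ => (z : ℂ))).mulVec x, (M₂.map (fun z : ℤ => (z : ℂ))).mulVec x]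

/-- Euclidean norm on `Fin m → ℝ`. -/
def enorm' {m : ℕ} (v : Fin m → ℝ) : ℝ := Real.sqrt (∑ i, v i ^ 2)

end

/-! Write `T = Q^{1/2}`, `X = Q^δ`, `W = T³ w` and `y = kq / Q`. In coordinates reflected along `r`,
`p₂` is a two-dimensional Fourier transform of `ω₀(|x|) h(y, ρ x₁)` with `ρ = |r| / T`. Poisson
summation in the two sums defining `h` shows that `h(y, ·)` acts as a delta function up to `O(y^N)`,
so that `p₂` is close to `c ρ⁻¹ ω̂₀(W·r^⊥ / |r|)`. The error is controlled by powers of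
`y (1 + |W·r| / |r|) / (1 + |W·r^⊥| / |r|)`, which is at most `X⁻¹`: apply the lower bound for
`μ_{M(w)}` to `r / k ∈ Λ(a, q)`.

The remaining sum over `Λ(a, q)` is evaluated by Poisson summation. The dual lattice is a rotated
copy of `q⁻¹ Λ(a, q)`, so the same lower bound pushes every nonzero frequency beyond `X`, even after
the shift by a multiple of `W^⊥` coming from `ω̂₀`, and only the integral survives. Both errors are
`O(T⁸ / X^n)` for every `n`. -/

open scoped FourierTransform

/-! ### Decay of Fourier transforms -/

lemma e2pi_eq_fourierChar (x : ℝ) : e2pi x = 𝐞 x := by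
  rw [e2pi, Real.fourierChar_apply]
  push_cast
  ring_nf

lemma fourierW0_eq_fourier (f : ℝ → ℝ) : fourierW0 f = 𝓕 (fun x => (f x : ℂ)) := by
  ext t
  simp only [fourierW0, Real.fourier_real_eq, e2pi_eq_fourierChar, Circle.smul_def, smul_eq_mul,
    mul_comm]

section Slices

variable {E V F : Type*} [TopologicalSpace E] [TopologicalSpace V] {g : E × V → F}

lemma hasCompactSupport_slice [R1Space V] [Zero F] (hg : HasCompactSupport g) (p : E) :
    HasCompactSupport fun x => g (p, x) :=
  .intro (hg.isCompact.image continuous_snd) fun x hx => by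
    by_contra h
    exact hx ⟨(p, x), subset_tsupport _ h, rfl⟩

lemma integral_slice_eq_setIntegral [MeasurableSpace V] {μ : Measure V} [NormedAddCommGroup F]
    [NormedSpace ℝ F] (p : E) :
    ∫ x, g (p, x) ∂μ = ∫ x in Prod.snd '' tsupport g, g (p, x) ∂μ :=
  (setIntegral_eq_integral_of_forall_compl_eq_zero fun x hx => by
    by_contra h
    exact hx ⟨(p, x), subset_tsupport _ h, rfl⟩).symm

lemma exists_integral_norm_slice_le [MeasurableSpace V] (μ : Measure V)
    [IsFiniteMeasureOnCompacts μ] [NormedAddCommGroup F] (hg : Continuous g)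
    (hgc : HasCompactSupport g) : ∃ K, 0 ≤ K ∧ ∀ p, ∫ x, ‖g (p, x)‖ ∂μ ≤ K := by
  obtain ⟨B, hB⟩ := hgc.exists_bound_of_continuous hg
  have hK : IsCompact (Prod.snd '' tsupport fun z => ‖g z‖) :=
    hgc.norm.isCompact.image continuous_snd
  refine ⟨|B| * μ.real (Prod.snd '' tsupport fun z => ‖g z‖), by positivity, fun p => ?_⟩
  rw [integral_slice_eq_setIntegral (g := fun z => ‖g z‖) p]
  refine (Real.le_norm_self _).trans (norm_setIntegral_le_of_norm_le_const hK.measure_lt_top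
    fun x _ => ?_)
  rw [norm_norm]
  exact (hB _).trans (le_abs_self B)

end Slices

universe u

section FourierDecay

variable {E : Type*} [NormedAddCommGroup E] [NormedSpace ℝ E] {V : Type u} [NormedAddCommGroup V]
  [NormedSpace ℝ V] [FiniteDimensional ℝ V] [MeasurableSpace V] [BorelSpace V] (μ : Measure V)
  [μ.IsAddHaarMeasure]

lemma norm_mul_norm_fourier_le {F : Type*} [NormedAddCommGroup F] [NormedSpace ℂ F] {f : V → F}
    (hf : ContDiff ℝ 1 f) (hfc : HasCompactSupport f) (l : V →L[ℝ] ℝ) :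
    ‖l‖ * ‖∫ x, 𝐞 (-(l x)) • f x ∂μ‖ ≤ ‖∫ x, 𝐞 (-(l x)) • fderiv ℝ f x ∂μ‖ := by
  have hderiv := congrFun (VectorFourier.fourierIntegral_fderiv (μ := μ)
    (ContinuousLinearMap.id ℝ (V →L[ℝ] ℝ)).flip (hf.continuous.integrable_of_hasCompactSupport hfc)
    (hf.differentiable one_ne_zero) ((hf.continuous_fderiv
      one_ne_zero).integrable_of_hasCompactSupport (hfc.fderiv ℝ))) l
  have hnorm := congrArg norm hderiv
  rw [VectorFourier.norm_fourierSMulRight] at hnorm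
  simp only [VectorFourier.fourierIntegral, ContinuousLinearMap.toLinearMap₁₂_apply_apply_apply,
    ContinuousLinearMap.flip_flip, _root_.neg_apply, norm_neg,
    ContinuousLinearMap.flip_apply, ContinuousLinearMap.id_apply] at hnorm
  rw [hnorm, mul_assoc]
  exact le_mul_of_one_le_left (mul_nonneg (norm_nonneg l) (norm_nonneg _))
    (by linarith [Real.pi_gt_three])

theorem exists_norm_fourier_slice_le {F : Type u} [NormedAddCommGroup F] [NormedSpace ℂ F]
    {g : E × V → F} (hg : ContDiff ℝ (⊤ : ℕ∞) g) (hgc : HasCompactSupport g) (N : ℕ) :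
    ∃ K, 0 ≤ K ∧ ∀ p (l : V →L[ℝ] ℝ),
      ‖∫ x, 𝐞 (-(l x)) • g (p, x) ∂μ‖ ≤ K / (1 + ‖l‖) ^ N := by
  induction N generalizing F with
  | zero =>
    obtain ⟨K, hK, hgK⟩ := exists_integral_norm_slice_le μ hg.continuous hgc
    refine ⟨K, hK, fun p l => ?_⟩
    rw [pow_zero, div_one]
    exact (norm_integral_le_integral_norm _).trans (by simpa only [Circle.norm_smul] using hgK p)
  | succ N ih =>
    let dg : E × V → V →L[ℝ] F := fun z => (fderiv ℝ g z).comp (.inr ℝ E V)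
    have hdg : ContDiff ℝ (⊤ : ℕ∞) dg :=
      (hg.fderiv_right (m := (⊤ : ℕ∞)) (by simp)).clm_comp contDiff_const
    have hdgc : HasCompactSupport dg :=
      (hgc.fderiv ℝ).comp_left (g := fun A : E × V →L[ℝ] F => A.comp (.inr ℝ E V))
        (ContinuousLinearMap.zero_comp _)
    obtain ⟨K₁, hK₁, h₁⟩ := ih hg hgc
    obtain ⟨K₂, hK₂, h₂⟩ := ih hdg hdgc
    refine ⟨K₁ + K₂, by positivity, fun p l => ?_⟩
    have hslice : ContDiff ℝ 1 fun x => g (p, x) :=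
      (hg.of_le (by simp)).comp (contDiff_const.prodMk contDiff_id)
    have hfderiv : fderiv ℝ (fun x => g (p, x)) = fun x => dg (p, x) := by
      ext1 x
      exact ((hg.differentiable (by simp) (p, x)).hasFDerivAt.comp x
        (hasFDerivAt_prodMk_right p x)).fderiv
    have hbound := norm_mul_norm_fourier_le μ hslice (hasCompactSupport_slice hgc p) l
    rw [hfderiv] at hbound
    rw [pow_succ, ← div_div, le_div_iff₀ (by positivity), add_div, mul_add, mul_one,
      mul_comm _ ‖l‖]
    exact add_le_add (h₁ p l) (hbound.trans (h₂ p l))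

end FourierDecay

lemma exists_norm_fourier_real_le {f : ℝ → ℂ} (hf : ContDiff ℝ (⊤ : ℕ∞) f)
    (hfc : HasCompactSupport f) (N : ℕ) : ∃ K, 0 ≤ K ∧ ∀ ξ, ‖𝓕 f ξ‖ ≤ K / (1 + |ξ|) ^ N := by
  obtain ⟨K, hK, h⟩ := exists_norm_fourier_slice_le volume (g := fun z : Unit × ℝ => f z.2)
    (hf.comp contDiff_snd) (hfc.comp_homeomorph (Homeomorph.punitProd ℝ)) N
  refine ⟨K, hK, fun ξ => ?_⟩
  have hξ := h () (ξ • ContinuousLinearMap.id ℝ ℝ)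
  rw [norm_smul, ContinuousLinearMap.norm_id, mul_one, Real.norm_eq_abs] at hξ
  simpa only [Real.fourier_real_eq, _root_.smul_apply, ContinuousLinearMap.id_apply,
    smul_eq_mul, mul_comm ξ] using hξ

/-! ### The Euclidean plane -/

lemma nrm2_eq_norm_toLp (x : ℝ × ℝ) : nrm2 x = ‖WithLp.toLp 2 x‖ := by
  simp [nrm2, WithLp.prod_norm_eq_of_L2]

lemma dot2_eq_inner_toLp (x y : ℝ × ℝ) :
    dot2 x y = inner ℝ (WithLp.toLp 2 x) (WithLp.toLp 2 y) := by
  simp [dot2, WithLp.prod_inner_apply, mul_comm]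

lemma nrm2_nonneg (x : ℝ × ℝ) : 0 ≤ nrm2 x := Real.sqrt_nonneg _

lemma nrm2_zero : nrm2 0 = 0 := by simp [nrm2]

lemma nrm2_ne_zero {x : ℝ × ℝ} (hx : x ≠ 0) : nrm2 x ≠ 0 := by
  rw [nrm2_eq_norm_toLp, norm_ne_zero_iff]
  simpa using hx

lemma nrm2_add_le (x y : ℝ × ℝ) : nrm2 (x + y) ≤ nrm2 x + nrm2 y := by
  simpa only [nrm2_eq_norm_toLp, WithLp.toLp_add] using norm_add_le _ _

lemma nrm2_smul (t : ℝ) (x : ℝ × ℝ) : nrm2 (t • x) = |t| * nrm2 x := by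
  simpa only [nrm2_eq_norm_toLp, WithLp.toLp_smul, Real.norm_eq_abs] using
    norm_smul t (WithLp.toLp 2 x)

lemma abs_fst_le_nrm2 (x : ℝ × ℝ) : |x.1| ≤ nrm2 x :=
  Real.abs_le_sqrt (le_add_of_nonneg_right (sq_nonneg _))

lemma abs_snd_le_nrm2 (x : ℝ × ℝ) : |x.2| ≤ nrm2 x :=
  Real.abs_le_sqrt (le_add_of_nonneg_left (sq_nonneg _))

lemma norm_le_nrm2 (x : ℝ × ℝ) : ‖x‖ ≤ nrm2 x :=
  norm_prod_le_iff.2 ⟨abs_fst_le_nrm2 x, abs_snd_le_nrm2 x⟩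

lemma abs_dot2_le (x y : ℝ × ℝ) : |dot2 x y| ≤ nrm2 x * nrm2 y := by
  simpa only [dot2_eq_inner_toLp, nrm2_eq_norm_toLp] using abs_real_inner_le_norm _ _

lemma dot2_self (x : ℝ × ℝ) : dot2 x x = nrm2 x ^ 2 := by
  rw [nrm2, Real.sq_sqrt (by positivity), dot2, sq, sq]

lemma nrm2_perp2 (x : ℝ × ℝ) : nrm2 (perp2 x) = nrm2 x := by
  simp [nrm2, perp2, add_comm]

lemma perp2_add (x y : ℝ × ℝ) : perp2 (x + y) = perp2 x + perp2 y := by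
  ext <;> simp [perp2, add_comm]

lemma perp2_smul (t : ℝ) (x : ℝ × ℝ) : perp2 (t • x) = t • perp2 x := by
  ext <;> simp [perp2]

lemma dot2_perp2_left (x y : ℝ × ℝ) : dot2 (perp2 x) y = -dot2 x (perp2 y) := by
  simp only [dot2, perp2]
  ring

lemma dot2_comm (x y : ℝ × ℝ) : dot2 x y = dot2 y x := by
  simp only [dot2, mul_comm]

lemma dot2_add_right (x y z : ℝ × ℝ) : dot2 x (y + z) = dot2 x y + dot2 x z := by
  simp only [dot2, Prod.fst_add, Prod.snd_add]
  ring

lemma dot2_smul_right (t : ℝ) (x y : ℝ × ℝ) : dot2 x (t • y) = t * dot2 x y := by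
  simp only [dot2, Prod.smul_fst, Prod.smul_snd, smul_eq_mul]
  ring

lemma dot2_smul_left (t : ℝ) (x y : ℝ × ℝ) : dot2 (t • x) y = t * dot2 x y := by
  rw [dot2_comm, dot2_smul_right, dot2_comm]

lemma continuous_dot2_left (ξ : ℝ × ℝ) : Continuous fun x => dot2 x ξ := by
  unfold dot2
  fun_prop

/-- The Fourier transform on the plane, with the normalisation `e(-x·ξ)`. -/
noncomputable def fourier2 (g : ℝ × ℝ → ℂ) (ξ : ℝ × ℝ) : ℂ := ∫ x, 𝐞 (-(dot2 x ξ)) • g x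

/-- A pair of integers as a point of the real plane. -/
abbrev toPlane (r : ℤ × ℤ) : ℝ × ℝ := ((r.1 : ℝ), (r.2 : ℝ))

lemma exists_norm_fourier2_slice_le {E : Type*} [NormedAddCommGroup E] [NormedSpace ℝ E]
    {g : E × (ℝ × ℝ) → ℂ} (hg : ContDiff ℝ (⊤ : ℕ∞) g) (hgc : HasCompactSupport g) (N : ℕ) :
    ∃ K, 0 ≤ K ∧ ∀ p ξ, ‖fourier2 (fun x => g (p, x)) ξ‖ ≤ K / (1 + nrm2 ξ) ^ N := by
  obtain ⟨K, hK, h⟩ := exists_norm_fourier_slice_le volume hg hgc N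
  refine ⟨K, hK, fun p ξ => ?_⟩
  let l : ℝ × ℝ →L[ℝ] ℝ := ξ.1 • .fst ℝ ℝ ℝ + ξ.2 • .snd ℝ ℝ ℝ
  have hl : ∀ x, l x = dot2 x ξ := fun x => by simp [l, dot2, mul_comm]
  have hξ : nrm2 ξ ≤ ‖l‖ := by
    rcases (nrm2_nonneg ξ).eq_or_lt with h0 | h0
    · exact h0 ▸ norm_nonneg l
    · refine le_of_mul_le_mul_right ?_ h0
      calc nrm2 ξ * nrm2 ξ = l ξ := by rw [hl, dot2_self, sq]
        _ ≤ ‖l‖ * ‖ξ‖ := (le_abs_self _).trans (l.le_opNorm ξ)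
        _ ≤ ‖l‖ * nrm2 ξ := by gcongr; exact norm_le_nrm2 ξ
  refine (by simpa only [fourier2, hl] using h p l : _ ≤ K / (1 + ‖l‖) ^ N).trans ?_
  have := nrm2_nonneg ξ
  gcongr

lemma exists_norm_fourier2_le {g : ℝ × ℝ → ℂ} (hg : ContDiff ℝ (⊤ : ℕ∞) g)
    (hgc : HasCompactSupport g) (N : ℕ) :
    ∃ K, 0 ≤ K ∧ ∀ ξ, ‖fourier2 g ξ‖ ≤ K / (1 + nrm2 ξ) ^ N := by
  obtain ⟨K, hK, h⟩ := exists_norm_fourier2_slice_le (g := fun z : Unit × (ℝ × ℝ) => g z.2)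
    (hg.comp contDiff_snd) (hgc.comp_homeomorph (Homeomorph.punitProd _)) N
  exact ⟨K, hK, h ()⟩

/-! ### Poisson summation -/

lemma fourier_comp_mul_left (f : ℝ → ℂ) {h : ℝ} (hh : 0 < h) (ξ : ℝ) :
    𝓕 (fun x => f (h * x)) ξ = (h⁻¹ : ℝ) • 𝓕 f (ξ / h) := by
  have hsub := Measure.integral_comp_mul_left (fun x => 𝐞 (-(x * (ξ / h))) • f x) h
  rw [abs_of_pos (inv_pos.2 hh)] at hsub
  simp only [Real.fourier_real_eq, ← hsub]
  congr! 5
  field_simp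

lemma fourier2_comp_smul (g : ℝ × ℝ → ℂ) {h : ℝ} (hh : 0 < h) (ξ : ℝ × ℝ) :
    fourier2 (fun x => g (h • x)) ξ = ((h ^ 2)⁻¹ : ℝ) • fourier2 g (h⁻¹ • ξ) := by
  have hsub := Measure.integral_comp_smul volume (fun x => 𝐞 (-(dot2 x (h⁻¹ • ξ))) • g x) h
  rw [show Module.finrank ℝ (ℝ × ℝ) = 2 by simp, abs_of_pos (by positivity)] at hsub
  simp only [dot2_smul_left, dot2_smul_right, inv_mul_cancel_left₀ hh.ne'] at hsub
  simpa only [fourier2, dot2_smul_right] using hsub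

lemma fourier2_fourierChar_smul (g : ℝ × ℝ → ℂ) (η ξ : ℝ × ℝ) :
    fourier2 (fun x => 𝐞 (-(dot2 x η)) • g x) ξ = fourier2 g (ξ + η) := by
  simp only [fourier2, smul_smul, ← AddChar.map_add_eq_mul, dot2_add_right, neg_add]

lemma summable_one_div_one_add_abs_sq : Summable fun n : ℤ => 1 / (1 + |(n : ℝ)|) ^ 2 := by
  refine (Real.summable_one_div_int_pow.2 one_lt_two).of_norm_bounded_eventually ?_
  filter_upwards [(Set.finite_singleton (0 : ℤ)).compl_mem_cofinite] with n hn
  have hn' : 0 < |(n : ℝ)| := abs_pos.2 (by simpa using hn)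
  rw [Real.norm_of_nonneg (by positivity), ← sq_abs (n : ℝ)]
  gcongr
  linarith

/-- A bound, uniform in `θ` and `T ≥ 1`, for `∑ₙ (1 + |T(n + θ)|)⁻²`; the factor `4` absorbs the
fractional part of `θ`. -/
noncomputable def shiftedSumBound : ℝ := 4 * ∑' n : ℤ, 1 / (1 + |(n : ℝ)|) ^ 2

lemma shiftedSumBound_nonneg : 0 ≤ shiftedSumBound :=
  mul_nonneg zero_le_four (tsum_nonneg fun _ => by positivity)

lemma one_div_one_add_nrm2_pow_four_le (x : ℝ × ℝ) :
    1 / (1 + nrm2 x) ^ 4 ≤ 1 / (1 + |x.1|) ^ 2 * (1 / (1 + |x.2|) ^ 2) := by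
  rw [one_div_mul_one_div]
  refine one_div_le_one_div_of_le (by positivity) ?_
  calc (1 + |x.1|) ^ 2 * (1 + |x.2|) ^ 2 ≤ (1 + nrm2 x) ^ 2 * (1 + nrm2 x) ^ 2 := by
        gcongr
        exacts [abs_fst_le_nrm2 x, abs_snd_le_nrm2 x]
    _ = (1 + nrm2 x) ^ 4 := by ring

section ShiftedSums

variable {T : ℝ} (hT : 1 ≤ T)

include hT

lemma one_div_shift_le (θ : ℝ) (n : ℤ) :
    1 / (1 + |T * (n + θ)|) ^ 2 ≤ 4 * (1 / (1 + |((n + ⌊θ⌋ : ℤ) : ℝ)|) ^ 2) := by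
  have hscale : |n + θ| ≤ |T * (n + θ)| := by
    rw [abs_mul, abs_of_nonneg (zero_le_one.trans hT)]
    exact le_mul_of_one_le_left (abs_nonneg _) hT
  have hfract : |((n + ⌊θ⌋ : ℤ) : ℝ)| ≤ |n + θ| + 1 := by
    have hsplit : ((n + ⌊θ⌋ : ℤ) : ℝ) = (n + θ) - Int.fract θ := by
      push_cast [Int.fract]
      ring
    rw [hsplit]
    refine (abs_sub _ _).trans (add_le_add_right ?_ _)
    rw [abs_of_nonneg (Int.fract_nonneg θ)]
    exact (Int.fract_lt_one θ).le
  rw [mul_one_div, div_le_div_iff₀ (by positivity) (by positivity), one_mul]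
  calc (1 + |((n + ⌊θ⌋ : ℤ) : ℝ)|) ^ 2 ≤ (2 * (1 + |T * (n + θ)|)) ^ 2 := by
        gcongr
        linarith [abs_nonneg (T * (n + θ))]
    _ = 4 * (1 + |T * (n + θ)|) ^ 2 := by ring

lemma summable_one_div_shift (θ : ℝ) : Summable fun n : ℤ => 1 / (1 + |T * (n + θ)|) ^ 2 :=
  .of_nonneg_of_le (fun _ => by positivity) (one_div_shift_le hT θ)
    (((Equiv.addRight ⌊θ⌋).summable_iff.2 summable_one_div_one_add_abs_sq).mul_left 4)

lemma tsum_one_div_shift_le (θ : ℝ) :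
    ∑' n : ℤ, 1 / (1 + |T * (n + θ)|) ^ 2 ≤ shiftedSumBound := by
  rw [shiftedSumBound, ← (Equiv.addRight ⌊θ⌋).tsum_eq fun n : ℤ => 1 / (1 + |(n : ℝ)|) ^ 2,
    ← tsum_mul_left]
  exact (summable_one_div_shift hT θ).tsum_le_tsum (one_div_shift_le hT θ)
    (((Equiv.addRight ⌊θ⌋).summable_iff.2 summable_one_div_one_add_abs_sq).mul_left 4)

lemma summable_one_div_shift2_mul (θ : ℝ × ℝ) : Summable fun n : ℤ × ℤ =>
    1 / (1 + |T * (n.1 + θ.1)|) ^ 2 * (1 / (1 + |T * (n.2 + θ.2)|) ^ 2) :=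
  (summable_one_div_shift hT θ.1).mul_of_nonneg (summable_one_div_shift hT θ.2)
    (fun _ => by positivity) (fun _ => by positivity)

lemma summable_one_div_shift2 (θ : ℝ × ℝ) :
    Summable fun n : ℤ × ℤ => 1 / (1 + nrm2 (T • (toPlane n + θ))) ^ 4 :=
  .of_nonneg_of_le (fun _ => by have := nrm2_nonneg; positivity)
    (fun _ => one_div_one_add_nrm2_pow_four_le _) (summable_one_div_shift2_mul hT θ)

lemma tsum_one_div_shift2_le (θ : ℝ × ℝ) :
    ∑' n : ℤ × ℤ, 1 / (1 + nrm2 (T • (toPlane n + θ))) ^ 4 ≤ shiftedSumBound ^ 2 := by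
  refine ((summable_one_div_shift2 hT θ).tsum_le_tsum
    (fun _ => one_div_one_add_nrm2_pow_four_le _) (summable_one_div_shift2_mul hT θ)).trans ?_
  have hprod := (summable_one_div_shift hT θ.1).tsum_mul_tsum (summable_one_div_shift hT θ.2)
    (summable_one_div_shift2_mul hT θ)
  exact hprod.symm.le.trans ((mul_le_mul (tsum_one_div_shift_le hT θ.1)
    (tsum_one_div_shift_le hT θ.2) (tsum_nonneg fun _ => by positivity)
    shiftedSumBound_nonneg).trans_eq (sq _).symm)

end ShiftedSums

lemma norm_tsum_sub_le_of_decay {ι : Type*} {F : ι → ℂ} {ρ : ι → ℝ} {K X : ℝ} {m N : ℕ} {o : ι}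
    (hρ : ∀ i, 1 ≤ ρ i) (hs : Summable fun i => 1 / ρ i ^ m) (hK : 0 ≤ K) (hX : 0 < X)
    (hF : ∀ i, ‖F i‖ ≤ K / ρ i ^ (N + m)) (hgap : ∀ i ≠ o, X ≤ ρ i) :
    ‖∑' i, F i - F o‖ ≤ K / X ^ N * ∑' i, 1 / ρ i ^ m := by
  classical
  have hpos : ∀ i, 0 < ρ i := fun i => zero_lt_one.trans_le (hρ i)
  have hsplit : ∀ i, ‖F i‖ ≤ K / ρ i ^ N * (1 / ρ i ^ m) := fun i => by
    rw [div_mul_div_comm, mul_one, ← pow_add]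
    exact hF i
  have hsum : Summable F := .of_norm_bounded (hs.mul_left K) fun i => (hsplit i).trans <| by
    have := hpos i
    gcongr
    exact div_le_self hK (one_le_pow₀ (hρ i))
  rw [hsum.tsum_eq_add_tsum_ite o, add_sub_cancel_left, ← tsum_mul_left]
  refine tsum_of_norm_bounded (hs.mul_left _).hasSum fun i => ?_
  have := hpos i
  split_ifs with hi
  · rw [norm_zero]
    positivity
  · refine (hsplit i).trans ?_
    gcongr
    exact hgap i hi

lemma tsum_eq_tsum_fourier {f : ℝ → ℂ} (hf : Continuous f) (hfc : HasCompactSupport f)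
    (hs : Summable fun n : ℤ => 𝓕 f n) : ∑' n : ℤ, f n = ∑' n : ℤ, 𝓕 f n := by
  have hO : f =O[Filter.cocompact ℝ] fun x : ℝ => |x| ^ (-(2 : ℝ)) := by
    refine Filter.EventuallyEq.trans_isBigO ?_ (Asymptotics.isBigO_zero _ _)
    filter_upwards [hfc.isCompact.compl_mem_cocompact] with x hx
    exact image_eq_zero_of_notMem_tsupport hx
  simpa using Real.tsum_eq_tsum_fourier_of_rpow_decay_of_summable hf one_lt_two hO hs 0

section PoissonPlane

variable {g : ℝ × ℝ → ℂ}

lemma finite_smul_toPlane_mem {K : Set (ℝ × ℝ)} (hK : IsCompact K) {h : ℝ} (hh : 0 < h) :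
    {r : ℤ × ℤ | h • toPlane r ∈ K}.Finite := by
  obtain ⟨R, hR⟩ := hK.isBounded.exists_norm_le
  have hcoord : ∀ n : ℤ, |h * n| ≤ R → n ∈ Set.Icc (-⌈R / h⌉) ⌈R / h⌉ := fun n hn => by
    rw [abs_mul, abs_of_pos hh, mul_comm, ← le_div_iff₀ hh] at hn
    exact abs_le.1 (by exact_mod_cast hn.trans (Int.le_ceil (R / h)))
  exact ((Set.finite_Icc _ _).prod (Set.finite_Icc _ _)).subset fun r hr =>
    ⟨hcoord _ ((norm_fst_le _).trans (hR _ hr)), hcoord _ ((norm_snd_le _).trans (hR _ hr))⟩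

lemma summable_mul_comp_smul_toPlane (hgc : HasCompactSupport g) {h : ℝ} (hh : 0 < h)
    (f : ℤ × ℤ → ℂ) : Summable fun r => f r * g (h • toPlane r) :=
  summable_of_hasFiniteSupport ((finite_smul_toPlane_mem hgc.isCompact hh).subset fun _ hr =>
    subset_tsupport _ (right_ne_zero_of_mul hr))

lemma fourier2_eq_fourier_fourier (hg : Continuous g) (hgc : HasCompactSupport g) (ξ : ℝ × ℝ) :
    fourier2 g ξ = 𝓕 (fun u => 𝓕 (fun s => g (u, s)) ξ.2) ξ.1 := by
  have hint : Integrable (fun x => 𝐞 (-(dot2 x ξ)) • g x) (volume.prod volume) :=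
    ((Real.continuous_fourierChar.comp (continuous_dot2_left ξ).neg).smul
      hg).integrable_of_hasCompactSupport hgc.smul_left
  rw [fourier2, Measure.volume_eq_prod, integral_prod _ hint]
  simp only [Real.fourier_real_eq]
  congr 1 with u
  rw [Circle.smul_def, ← integral_smul]
  simp only [← Circle.smul_def, smul_smul, ← AddChar.map_add_eq_mul, dot2, neg_add]

lemma continuous_fourier_slice (hg : Continuous g) (hgc : HasCompactSupport g) (η : ℝ) :
    Continuous fun u => 𝓕 (fun s => g (u, s)) η := by
  let e : ℝ × ℝ → ℂ := fun z => 𝐞 (-(z.2 * η)) • g z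
  have he : Continuous e := (Real.continuous_fourierChar.comp (by fun_prop)).smul hg
  have hec : HasCompactSupport e := hgc.smul_left
  have hslice : (fun u => 𝓕 (fun s => g (u, s)) η) =
      fun u => ∫ s in Prod.snd '' tsupport e, e (u, s) := by
    ext u
    rw [Real.fourier_real_eq, ← integral_slice_eq_setIntegral]
  rw [hslice]
  exact continuous_parametric_integral_of_continuous he (hec.isCompact.image continuous_snd)

lemma hasCompactSupport_fourier_slice (hgc : HasCompactSupport g) (η : ℝ) :
    HasCompactSupport fun u => 𝓕 (fun s => g (u, s)) η :=
  .intro (hgc.isCompact.image continuous_fst) fun u hu => by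
    have hzero : ∀ s, g (u, s) = 0 := fun s => by
      by_contra h
      exact hu ⟨(u, s), subset_tsupport _ h, rfl⟩
    simp [Real.fourier_real_eq, hzero]

lemma summable_fourier2_toPlane (hg : ContDiff ℝ (⊤ : ℕ∞) g) (hgc : HasCompactSupport g) {T : ℝ}
    (hT : 1 ≤ T) (θ : ℝ × ℝ) : Summable fun n => fourier2 g (T • (toPlane n + θ)) := by
  obtain ⟨K, -, hdecay⟩ := exists_norm_fourier2_le hg hgc 4
  refine .of_norm_bounded ((summable_one_div_shift2 hT θ).mul_left K) fun n => ?_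
  rw [mul_one_div]
  exact hdecay _

lemma summable_fourier_slice (hg : ContDiff ℝ (⊤ : ℕ∞) g) (hgc : HasCompactSupport g) :
    Summable fun n : ℤ × ℤ => 𝓕 (fun s => g (n.1, s)) n.2 := by
  obtain ⟨K, hK, hdecay⟩ := exists_norm_fourier_slice_le volume hg hgc 2
  obtain ⟨R, hR⟩ := (hgc.isCompact.image continuous_fst).isBounded.exists_norm_le
  have hvanish : ∀ u : ℝ, R < |u| → ∀ s, g (u, s) = 0 := fun u hu s => by
    by_contra h
    exact (hR u ⟨(u, s), subset_tsupport _ h, rfl⟩).not_gt hu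
  have hsum := (summable_one_div_one_add_abs_sq.mul_of_nonneg summable_one_div_one_add_abs_sq
    (fun _ => by positivity) (fun _ => by positivity)).mul_left (K * (1 + |R|) ^ 2)
  refine .of_norm_bounded hsum fun n => ?_
  rcases le_or_gt (|(n.1 : ℝ)|) R with hn | hn
  · have hξ := hdecay (n.1 : ℝ) ((n.2 : ℝ) • ContinuousLinearMap.id ℝ ℝ)
    rw [norm_smul, ContinuousLinearMap.norm_id, mul_one, Real.norm_eq_abs] at hξ
    simp only [_root_.smul_apply, ContinuousLinearMap.id_apply, smul_eq_mul,
      mul_comm (n.2 : ℝ)] at hξ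
    have hratio : 1 ≤ (1 + |R|) ^ 2 / (1 + |(n.1 : ℝ)|) ^ 2 := by
      rw [one_le_div (by positivity)]
      exact pow_le_pow_left₀ (by positivity) (by linarith [le_abs_self R]) 2
    calc ‖𝓕 (fun s => g (n.1, s)) n.2‖ ≤ K / (1 + |(n.2 : ℝ)|) ^ 2 := by
          rwa [Real.fourier_real_eq]
      _ ≤ K / (1 + |(n.2 : ℝ)|) ^ 2 * ((1 + |R|) ^ 2 / (1 + |(n.1 : ℝ)|) ^ 2) :=
          le_mul_of_one_le_right (by positivity) hratio
      _ = _ := by ring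
  · simp only [Real.fourier_real_eq, hvanish _ hn, smul_zero, integral_zero, norm_zero]
    positivity

/-- One-dimensional Poisson summation, first along the rows and then along the columns. -/
theorem tsum_eq_tsum_fourier2 (hg : ContDiff ℝ (⊤ : ℕ∞) g) (hgc : HasCompactSupport g) :
    ∑' r, g (toPlane r) = ∑' n, fourier2 g (toPlane n) := by
  have hsum : Summable fun r => g (toPlane r) := by
    simpa using summable_mul_comp_smul_toPlane hgc one_pos 1
  have hrows : Summable fun n : ℤ × ℤ => 𝓕 (fun s => g (n.1, s)) n.2 :=
    summable_fourier_slice hg hgc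
  have hsumF : Summable fun n => fourier2 g (toPlane n) := by
    simpa using summable_fourier2_toPlane hg hgc le_rfl 0
  have hcol : ∀ k : ℤ, ∑' m : ℤ, 𝓕 (fun s => g (m, s)) k = ∑' m : ℤ, fourier2 g (m, k) := by
    intro k
    have hs : Summable fun m : ℤ => fourier2 g (m, k) :=
      ((Equiv.prodComm ℤ ℤ).summable_iff.2 hsumF).prod_factor k
    simp only [fourier2_eq_fourier_fourier hg.continuous hgc] at hs ⊢
    exact tsum_eq_tsum_fourier (continuous_fourier_slice hg.continuous hgc k)
      (hasCompactSupport_fourier_slice hgc k) hs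
  calc ∑' r, g (toPlane r) = ∑' (m : ℤ) (k : ℤ), g (m, k) := hsum.tsum_prod
    _ = ∑' (m : ℤ) (k : ℤ), 𝓕 (fun s => g (m, s)) k := tsum_congr fun m =>
        tsum_eq_tsum_fourier (f := fun s => g (m, s)) (hg.continuous.comp (by fun_prop))
          (hasCompactSupport_slice hgc _) (hrows.prod_factor m)
    _ = ∑' (k : ℤ) (m : ℤ), 𝓕 (fun s => g (m, s)) k :=
        (Summable.tsum_comm (f := fun m k : ℤ => 𝓕 (fun s => g (m, s)) (k : ℝ)) hrows).symm
    _ = ∑' (k : ℤ) (m : ℤ), fourier2 g (m, k) := tsum_congr hcol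
    _ = ∑' (m : ℤ) (k : ℤ), fourier2 g (m, k) :=
        Summable.tsum_comm (f := fun m k : ℤ => fourier2 g ((m : ℝ), (k : ℝ))) hsumF
    _ = ∑' n, fourier2 g (toPlane n) := hsumF.tsum_prod.symm

lemma contDiff_fourierChar : ContDiff ℝ (⊤ : ℕ∞) fun x : ℝ => (𝐞 x : ℂ) := by
  simp only [Real.fourierChar_apply]
  exact ((Complex.ofRealCLM.contDiff.comp (contDiff_const.mul contDiff_id)).mul
    contDiff_const).cexp

lemma tsum_smul_toPlane_eq_tsum_fourier2 (hg : ContDiff ℝ (⊤ : ℕ∞) g) (hgc : HasCompactSupport g)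
    {T : ℝ} (hT : 0 < T) (θ : ℝ × ℝ) :
    ∑' r, 𝐞 (-(dot2 (toPlane r) θ)) • g (T⁻¹ • toPlane r) =
      (T ^ 2 : ℝ) • ∑' n, fourier2 g (T • (toPlane n + θ)) := by
  have hsmooth : ContDiff ℝ (⊤ : ℕ∞) fun x => 𝐞 (-(dot2 x θ)) • g (T⁻¹ • x) := by
    simp only [Circle.smul_def, smul_eq_mul]
    exact (contDiff_fourierChar.comp (by unfold dot2; fun_prop)).mul
      (hg.comp (contDiff_const_smul _))
  have hcompact : HasCompactSupport fun x => 𝐞 (-(dot2 x θ)) • g (T⁻¹ • x) :=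
    (hgc.comp_homeomorph (Homeomorph.smulOfNeZero T⁻¹ (inv_ne_zero hT.ne'))).smul_left
  rw [tsum_eq_tsum_fourier2 hsmooth hcompact, ← tsum_const_smul'']
  refine tsum_congr fun n => ?_
  rw [fourier2_fourierChar_smul, fourier2_comp_smul g (inv_pos.2 hT), inv_inv, inv_pow, inv_inv]

end PoissonPlane

/-! ### The lattices `Λ(a, q)` -/

section Lattice

variable {a : ℤ × ℤ} {q : ℕ}

lemma exists_bezout (ha : Nat.gcd (Int.gcd a.1 a.2) q = 1) :
    ∃ x y z : ℤ, a.1 * x + a.2 * y + q * z = 1 := by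
  have h₁ := Int.gcd_eq_gcd_ab a.1 a.2
  have h₂ := Nat.gcd_eq_gcd_ab (Int.gcd a.1 a.2) q
  rw [ha, h₁] at h₂
  refine ⟨a.1.gcdA a.2 * (a.1.gcd a.2).gcdA q, a.1.gcdB a.2 * (a.1.gcd a.2).gcdA q,
    (a.1.gcd a.2).gcdB q, ?_⟩
  push_cast at h₂
  linear_combination -h₂

lemma mem_Lambda_iff (ha : Nat.gcd (Int.gcd a.1 a.2) q = 1) {r : ℤ × ℤ} :
    r ∈ Lambda a q ↔ (q : ℤ) ∣ r.1 * a.2 - r.2 * a.1 := by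
  constructor
  · rintro ⟨k, y, rfl⟩
    exact ⟨y.1 * a.2 - y.2 * a.1, by ring⟩
  · rintro ⟨d, hd⟩
    obtain ⟨x, y, z, hxyz⟩ := exists_bezout ha
    refine ⟨x * r.1 + y * r.2, (y * d + z * r.1, -x * d + z * r.2), Prod.ext ?_ ?_⟩
    · linear_combination y * hd - r.1 * hxyz
    · linear_combination -x * hd - r.2 * hxyz

/-- The parametrisation `(m, n) ↦ m a + q n` of `Λ(a, q)` by a residue `m` and `n ∈ ℤ²`. -/
noncomputable def lambdaEquiv [NeZero q] (ha : Nat.gcd (Int.gcd a.1 a.2) q = 1) :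
    ZMod q × (ℤ × ℤ) ≃ Lambda a q :=
  .ofBijective (fun p => ⟨(p.1.val * a.1 + q * p.2.1, p.1.val * a.2 + q * p.2.2),
    p.1.val, p.2, rfl⟩) <| by
  have hq : (q : ℤ) ≠ 0 := Nat.cast_ne_zero.2 (NeZero.ne q)
  constructor
  · rintro ⟨m, n⟩ ⟨m', n'⟩ h
    obtain ⟨h₁, h₂⟩ := Prod.ext_iff.1 (Subtype.ext_iff.1 h)
    obtain ⟨x, y, z, hxyz⟩ := exists_bezout ha
    have hm : m = m' := by
      rw [← ZMod.natCast_zmod_val m, ← ZMod.natCast_zmod_val m', ← sub_eq_zero]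
      have hdvd : (q : ℤ) ∣ m.val - m'.val :=
        ⟨x * (n'.1 - n.1) + y * (n'.2 - n.2) + z * (m.val - m'.val), by
          linear_combination x * h₁ + y * h₂ - (m.val - m'.val : ℤ) * hxyz⟩
      exact_mod_cast (ZMod.intCast_zmod_eq_zero_iff_dvd _ q).2 hdvd
    subst hm
    exact Prod.ext rfl (Prod.ext (mul_left_cancel₀ hq (add_left_cancel h₁))
      (mul_left_cancel₀ hq (add_left_cancel h₂)))
  · rintro ⟨_, k, y, rfl⟩
    have hk : ((k : ZMod q).val : ℤ) + q * (k / q) = k := by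
      rw [ZMod.val_intCast, Int.emod_add_mul_ediv]
    refine ⟨(k, (a.1 * (k / q) + y.1, a.2 * (k / q) + y.2)), Subtype.ext (Prod.ext ?_ ?_)⟩
    · linear_combination a.1 * hk
    · linear_combination a.2 * hk

lemma smul_toPlane_lambdaEquiv [NeZero q] (ha : Nat.gcd (Int.gcd a.1 a.2) q = 1)
    (p : ZMod q × (ℤ × ℤ)) : (q : ℝ)⁻¹ • toPlane (lambdaEquiv ha p) =
      toPlane p.2 + (p.1.val / q : ℝ) • toPlane a := by
  have hq : (q : ℝ) ≠ 0 := Nat.cast_ne_zero.2 (NeZero.ne q)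
  ext <;> simp [lambdaEquiv] <;> field_simp <;> ring

lemma sum_fourierChar_eq_indicator [NeZero q] (ha : Nat.gcd (Int.gcd a.1 a.2) q = 1)
    (r : ℤ × ℤ) :
    ∑ m : ZMod q, (𝐞 (-(dot2 (toPlane r) ((m.val / q : ℝ) • perp2 (toPlane a)))) : ℂ) =
      (Lambda a q).indicator (fun _ => (q : ℂ)) r := by
  classical
  have hchar : ∀ m : ZMod q,
      (𝐞 (-(dot2 (toPlane r) ((m.val / q : ℝ) • perp2 (toPlane a)))) : ℂ) =
        ZMod.stdAddChar (m * ((-(r.1 * a.2 - r.2 * a.1) : ℤ) : ZMod q)) := by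
    intro m
    conv_rhs => rw [← ZMod.natCast_zmod_val m, ← Int.cast_natCast, ← Int.cast_mul,
      ZMod.stdAddChar_coe]
    generalize m.val = k
    rw [Real.fourierChar_apply]
    simp only [dot2, perp2, Prod.smul_fst, Prod.smul_snd, smul_eq_mul]
    push_cast
    ring_nf
  rw [Finset.sum_congr rfl fun m _ => hchar m,
    AddChar.sum_mulShift _ (ZMod.isPrimitive_stdAddChar q), ZMod.card, Set.indicator_apply,
    mem_Lambda_iff ha, ← ZMod.intCast_zmod_eq_zero_iff_dvd]
  simp only [Int.cast_neg, neg_eq_zero, Nat.cast_ite, Nat.cast_zero]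
  congr

variable {g : ℝ × ℝ → ℂ} {T : ℝ}

lemma mul_tsum_Lambda_eq_sum_tsum_fourierChar [NeZero q] (ha : Nat.gcd (Int.gcd a.1 a.2) q = 1)
    (hgc : HasCompactSupport g) (hT : 0 < T) :
    (q : ℂ) * ∑' r : Lambda a q, g (T⁻¹ • toPlane r) =
      ∑ m : ZMod q, ∑' r, 𝐞 (-(dot2 (toPlane r) ((m.val / q : ℝ) • perp2 (toPlane a)))) •
        g (T⁻¹ • toPlane r) := by
  simp only [Circle.smul_def, smul_eq_mul]
  rw [← Summable.tsum_finsetSum fun m _ =>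
    summable_mul_comp_smul_toPlane hgc (inv_pos.2 hT) _, ← tsum_mul_left,
    tsum_subtype (Lambda a q) fun r => (q : ℂ) * g (T⁻¹ • toPlane r)]
  refine tsum_congr fun r => ?_
  rw [← Finset.sum_mul, sum_fourierChar_eq_indicator ha]
  by_cases hr : r ∈ Lambda a q <;> simp [hr]

/-- Rotation by a right angle, as a permutation of `ℤ²`. -/
def perpEquiv : ℤ × ℤ ≃ ℤ × ℤ where
  toFun n := (n.2, -n.1)
  invFun n := (-n.2, n.1)
  left_inv n := by simp
  right_inv n := by simp

lemma toPlane_perpEquiv (n : ℤ × ℤ) : toPlane (perpEquiv n) = perp2 (toPlane n) := by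
  simp [perpEquiv, perp2]

lemma smul_perp2_lambdaEquiv [NeZero q] (ha : Nat.gcd (Int.gcd a.1 a.2) q = 1)
    (p : ZMod q × (ℤ × ℤ)) : (T / q) • perp2 (toPlane (lambdaEquiv ha p)) =
      T • (toPlane (perpEquiv p.2) + (p.1.val / q : ℝ) • perp2 (toPlane a)) := by
  rw [div_eq_mul_inv, mul_smul, ← perp2_smul, smul_toPlane_lambdaEquiv, perp2_add, perp2_smul,
    toPlane_perpEquiv]

lemma summable_zmod_prod [NeZero q] {E : Type*} [NormedAddCommGroup E] [CompleteSpace E]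
    {f : ZMod q × (ℤ × ℤ) → E} (hf : ∀ m, Summable fun n => ‖f (m, n)‖) : Summable f :=
  .of_norm <| (summable_prod_of_nonneg fun _ => norm_nonneg _).2 ⟨hf, .of_finite⟩

/-- The dual lattice of `Λ(a, q)` is `q⁻¹ Λ(a, q)^⊥`. -/
theorem tsum_Lambda_eq_tsum_fourier2 [NeZero q] (ha : Nat.gcd (Int.gcd a.1 a.2) q = 1)
    (hg : ContDiff ℝ (⊤ : ℕ∞) g) (hgc : HasCompactSupport g) (hT : 1 ≤ T) :
    ∑' r : Lambda a q, g (T⁻¹ • toPlane r) =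
      (T ^ 2 / q : ℝ) • ∑' l : Lambda a q, fourier2 g ((T / q) • perp2 (toPlane l)) := by
  have hq : (q : ℂ) ≠ 0 := Nat.cast_ne_zero.2 (NeZero.ne q)
  have hT0 : 0 < T := zero_lt_one.trans_le hT
  have hsum : Summable fun p : ZMod q × (ℤ × ℤ) =>
      fourier2 g (T • (toPlane (perpEquiv p.2) + (p.1.val / q : ℝ) • perp2 (toPlane a))) :=
    summable_zmod_prod fun m => (perpEquiv.summable_iff.2 (summable_fourier2_toPlane hg hgc hT
      ((m.val / q : ℝ) • perp2 (toPlane a)))).norm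
  have hdual : ∑' l : Lambda a q, fourier2 g ((T / q) • perp2 (toPlane l)) =
      ∑ m : ZMod q, ∑' n,
        fourier2 g (T • (toPlane n + (m.val / q : ℝ) • perp2 (toPlane a))) := by
    rw [← (lambdaEquiv ha).tsum_eq]
    simp only [smul_perp2_lambdaEquiv]
    rw [hsum.tsum_prod, tsum_fintype]
    exact Finset.sum_congr rfl fun m _ => perpEquiv.tsum_eq fun n =>
      fourier2 g (T • (toPlane n + (m.val / q : ℝ) • perp2 (toPlane a)))
  refine mul_left_cancel₀ hq ?_
  rw [mul_tsum_Lambda_eq_sum_tsum_fourierChar ha hgc hT0, hdual]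
  simp only [tsum_smul_toPlane_eq_tsum_fourier2 hg hgc hT0, Complex.real_smul, ← Finset.mul_sum]
  push_cast
  field_simp

section DualSum

variable [NeZero q] (ha : Nat.gcd (Int.gcd a.1 a.2) q = 1) (hT : 1 ≤ T) (η : ℝ × ℝ)

include ha hT

lemma one_div_dual_lambdaEquiv (p : ZMod q × (ℤ × ℤ)) :
    1 / (1 + nrm2 ((T / q) • perp2 (toPlane (lambdaEquiv ha p)) + η)) ^ 4 =
      1 / (1 + nrm2 (T • (toPlane (perpEquiv p.2) +
        ((p.1.val / q : ℝ) • perp2 (toPlane a) + T⁻¹ • η)))) ^ 4 := by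
  rw [smul_perp2_lambdaEquiv, ← add_assoc, smul_add T _ (T⁻¹ • η),
    smul_inv_smul₀ (zero_lt_one.trans_le hT).ne']

lemma summable_one_div_dual_comp_lambdaEquiv : Summable fun p =>
    1 / (1 + nrm2 ((T / q) • perp2 (toPlane (lambdaEquiv ha p)) + η)) ^ 4 := by
  simp only [one_div_dual_lambdaEquiv ha hT]
  exact summable_zmod_prod fun m => (perpEquiv.summable_iff.2
    (summable_one_div_shift2 hT ((m.val / q : ℝ) • perp2 (toPlane a) + T⁻¹ • η))).norm

lemma summable_one_div_dual : Summable fun l : Lambda a q =>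
    1 / (1 + nrm2 ((T / q) • perp2 (toPlane l) + η)) ^ 4 :=
  (lambdaEquiv ha).summable_iff.1 (summable_one_div_dual_comp_lambdaEquiv ha hT η)

lemma tsum_one_div_dual_le : ∑' l : Lambda a q,
    1 / (1 + nrm2 ((T / q) • perp2 (toPlane l) + η)) ^ 4 ≤ q * shiftedSumBound ^ 2 := by
  rw [← (lambdaEquiv ha).tsum_eq,
    (summable_one_div_dual_comp_lambdaEquiv ha hT η).tsum_prod, tsum_fintype]
  refine (Finset.sum_le_card_nsmul _ _ (shiftedSumBound ^ 2) fun m _ => ?_).trans_eq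
    (by simp [ZMod.card])
  simp only [one_div_dual_lambdaEquiv ha hT]
  rw [perpEquiv.tsum_eq fun n => 1 / (1 + nrm2 (T • (toPlane n + _))) ^ 4]
  exact tsum_one_div_shift2_le hT _

theorem norm_tsum_Lambda_sub_fourier2_zero_le (hg : ContDiff ℝ (⊤ : ℕ∞) g)
    (hgc : HasCompactSupport g) {K X : ℝ} {N : ℕ} (hK : 0 ≤ K) (hX : 0 < X)
    (hdecay : ∀ ξ, ‖fourier2 g ξ‖ ≤ K / (1 + nrm2 (ξ + η)) ^ (N + 4))
    (hgap : ∀ l ∈ Lambda a q, l ≠ 0 → X ≤ 1 + nrm2 ((T / q) • perp2 (toPlane l) + η)) :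
    ‖∑' r : Lambda a q, g (T⁻¹ • toPlane r) - (T ^ 2 / q : ℝ) • fourier2 g 0‖ ≤
      K * shiftedSumBound ^ 2 * T ^ 2 / X ^ N := by
  have hq : (0 : ℝ) < q := Nat.cast_pos.2 (NeZero.pos q)
  let o : Lambda a q := ⟨0, 0, 0, by simp [Prod.ext_iff]⟩
  have ho : fourier2 g ((T / q) • perp2 (toPlane o)) = fourier2 g 0 := by
    congr 1
    ext <;> simp [o, perp2]
  have hdual := norm_tsum_sub_le_of_decay (o := o)
    (fun l => le_add_of_nonneg_right (nrm2_nonneg ((T / q) • perp2 (toPlane l) + η)))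
    (summable_one_div_dual ha hT η) hK hX (fun l => hdecay ((T / q) • perp2 (toPlane l)))
    (fun l hl => hgap l l.2 fun h => hl (Subtype.ext h))
  rw [tsum_Lambda_eq_tsum_fourier2 ha hg hgc hT, ← smul_sub, norm_smul, ← ho,
    Real.norm_of_nonneg (by positivity)]
  calc T ^ 2 / q * _ ≤ T ^ 2 / q * (K / X ^ N * (q * shiftedSumBound ^ 2)) := by
        gcongr
        refine hdual.trans ?_
        gcongr
        exact tsum_one_div_dual_le ha hT η
    _ = K * shiftedSumBound ^ 2 * T ^ 2 / X ^ N := by field_simp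

end DualSum

end Lattice

/-! ### Smooth radial functions -/

section Radial

variable {F : Type*} [NormedAddCommGroup F] [NormedSpace ℝ F] {f : ℝ → F}

lemma hasDerivAt_integral_pow_smul (hf : ContDiff ℝ 1 f) (k : ℕ) (x : ℝ) :
    HasDerivAt (fun x => ∫ t in (0 : ℝ)..1, t ^ k • f (t * x))
      (∫ t in (0 : ℝ)..1, t ^ (k + 1) • deriv f (t * x)) x := by
  have : Continuous (deriv f) := hf.continuous_deriv le_rfl
  have hcont := hf.continuous
  have hF' : Continuous fun z : ℝ × ℝ => z.2 ^ (k + 1) • deriv f (z.2 * z.1) := by fun_prop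
  obtain ⟨K, hK⟩ := (((isCompact_closedBall x 1).prod
    (isCompact_Icc (a := (0 : ℝ)) (b := 1))).image hF').isBounded.exists_norm_le
  refine (intervalIntegral.hasDerivAt_integral_of_dominated_loc_of_deriv_le
    (F := fun x t => t ^ k • f (t * x)) (F' := fun x t => t ^ (k + 1) • deriv f (t * x))
    (bound := fun _ => K) (Metric.closedBall_mem_nhds x one_pos)
    (.of_forall fun y => Continuous.aestronglyMeasurable (by fun_prop))
    (Continuous.intervalIntegrable (by fun_prop) _ _)
    (Continuous.aestronglyMeasurable (by fun_prop))
    (.of_forall fun t ht y hy => ?_) intervalIntegrable_const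
    (.of_forall fun t _ y _ => ?_)).2
  · rw [Set.uIoc_of_le zero_le_one] at ht
    exact hK _ ⟨(y, t), ⟨hy, ht.1.le, ht.2⟩, rfl⟩
  · have hf_at := (hf.differentiable one_ne_zero (t * y)).hasDerivAt
    have hcomp := hf_at.scomp y ((hasDerivAt_id y).const_mul t)
    exact (hcomp.const_smul (t ^ k)).congr_deriv (by rw [mul_one, smul_smul, pow_succ])

lemma contDiff_integral_pow_smul (n k : ℕ) (hf : ContDiff ℝ (⊤ : ℕ∞) f) :
    ContDiff ℝ n fun x => ∫ t in (0 : ℝ)..1, t ^ k • f (t * x) := by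
  have hderiv : ∀ {f : ℝ → F}, ContDiff ℝ (⊤ : ℕ∞) f → ∀ k x, _ := fun hf =>
    hasDerivAt_integral_pow_smul (hf.of_le (by exact_mod_cast le_top))
  induction n generalizing k f with
  | zero =>
    rw [Nat.cast_zero, contDiff_zero]
    exact continuous_iff_continuousAt.2 fun x => (hderiv hf k x).continuousAt
  | succ n ih =>
    rw [Nat.cast_add, Nat.cast_one, contDiff_succ_iff_deriv]
    refine ⟨fun x => (hderiv hf k x).differentiableAt, by simp, ?_⟩
    rw [funext fun x => (hderiv hf k x).deriv]
    exact ih (k + 1) (contDiff_infty_iff_deriv.1 hf).2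

lemma odd_deriv_of_even (hf : f.Even) : (deriv f).Odd := fun x => by
  have h := deriv_comp_neg f x
  rw [funext hf] at h
  rw [h, neg_neg]

lemma even_deriv_of_odd (hf : f.Odd) : (deriv f).Even := fun x => by
  have h := deriv_comp_neg f x
  rw [funext hf, deriv.fun_neg] at h
  exact (neg_injective h).symm

variable [CompleteSpace F]

lemma smul_integral_deriv_mul (hf : ContDiff ℝ 1 f) (x : ℝ) :
    x • ∫ t in (0 : ℝ)..1, deriv f (t * x) = f x - f 0 := by
  have : Continuous (deriv f) := hf.continuous_deriv le_rfl
  have hchain : ∀ t ∈ Set.uIcc (0 : ℝ) 1,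
      HasDerivAt (fun t => f (t * x)) (x • deriv f (t * x)) t := fun t _ => by
    have hf_at := (hf.differentiable one_ne_zero (t * x)).hasDerivAt
    exact (hf_at.scomp t ((hasDerivAt_id t).mul_const x)).congr_deriv (by rw [one_mul])
  rw [← intervalIntegral.integral_smul, intervalIntegral.integral_eq_sub_of_hasDerivAt hchain
    (Continuous.intervalIntegrable (by fun_prop) _ _), one_mul, zero_mul]

lemma exists_deriv_eq_smul_of_even (hf : ContDiff ℝ (⊤ : ℕ∞) f) (he : f.Even) :
    ∃ g : ℝ → F, ContDiff ℝ (⊤ : ℕ∞) g ∧ g.Even ∧ ∀ x, deriv f x = x • g x := by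
  have hf' : ContDiff ℝ (⊤ : ℕ∞) (deriv f) := (contDiff_infty_iff_deriv.1 hf).2
  have hodd := odd_deriv_of_even he
  refine ⟨fun x => ∫ t in (0 : ℝ)..1, deriv (deriv f) (t * x), ?_, fun x => ?_, fun x => ?_⟩
  · rw [contDiff_infty]
    intro n
    simpa using contDiff_integral_pow_smul n 0 (contDiff_infty_iff_deriv.1 hf').2
  · simp only [mul_neg, even_deriv_of_odd hodd _]
  · have : IsAddTorsionFree F := .of_isTorsionFree ℝ F
    rw [smul_integral_deriv_mul (hf'.of_le (by exact_mod_cast le_top)), hodd.map_zero, sub_zero]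

variable {E : Type*} [NormedAddCommGroup E] [InnerProductSpace ℝ E]

omit [CompleteSpace F] in
lemma hasFDerivAt_comp_norm {g : ℝ → F} (hf : Differentiable ℝ f)
    (hfg : ∀ x, deriv f x = x • g x) (x : E) :
    HasFDerivAt (fun x : E => f ‖x‖) ((innerSL ℝ x).smulRight (g ‖x‖)) x := by
  rcases eq_or_ne x 0 with rfl | hx
  · have h0 : HasDerivAt f 0 ‖(0 : E)‖ := (hf _).hasDerivAt.congr_deriv (by simp [hfg])
    have ho := (hasDerivAt_iff_isLittleO.1 h0).comp_tendsto (continuous_norm.tendsto (0 : E))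
    rw [hasFDerivAt_iff_isLittleO]
    refine (ho.trans_isBigO (k := fun x : E => x - 0) ?_).congr_left fun x => ?_
    · simpa [Function.comp_def] using (Asymptotics.isBigO_refl (fun x : E => x) _).norm_left
    · simp
  · have hx' : ‖x‖ ≠ 0 := norm_ne_zero_iff.2 hx
    have hsq := (hasStrictFDerivAt_norm_sq x).hasFDerivAt.sqrt (pow_ne_zero 2 hx')
    simp only [Real.sqrt_sq (norm_nonneg _)] at hsq
    refine ((hf ‖x‖).hasDerivAt.hasFDerivAt.comp x hsq).congr_fderiv ?_
    ext y
    simp only [hfg, ContinuousLinearMap.comp_apply, _root_.smul_apply,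
      ContinuousLinearMap.toSpanSingleton_apply, ContinuousLinearMap.smulRight_apply,
      innerSL_apply_apply, smul_eq_mul]
    match_scalars
    field_simp
    exact two_nsmul _ |>.trans (two_mul _).symm

theorem contDiff_comp_norm_of_even (hf : ContDiff ℝ (⊤ : ℕ∞) f) (he : f.Even) :
    ContDiff ℝ (⊤ : ℕ∞) fun x : E => f ‖x‖ := by
  rw [contDiff_infty]
  intro n
  induction n generalizing f with
  | zero =>
    rw [Nat.cast_zero, contDiff_zero]
    exact hf.continuous.comp continuous_norm
  | succ n ih =>
    obtain ⟨g, hg, hge, hfg⟩ := exists_deriv_eq_smul_of_even hf he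
    rw [Nat.cast_add, Nat.cast_one, contDiff_succ_iff_hasFDerivAt]
    exact ⟨_, (innerSL ℝ).contDiff.smulRight (ih hg hge),
      hasFDerivAt_comp_norm (hf.differentiable (by simp)) hfg⟩

lemma contDiff_toLp : ContDiff ℝ (⊤ : ℕ∞) (WithLp.toLp 2 : ℝ × ℝ → WithLp 2 (ℝ × ℝ)) :=
  (WithLp.prodContinuousLinearEquiv 2 ℝ ℝ ℝ).symm.contDiff

lemma contDiff_comp_nrm2_of_even (hf : ContDiff ℝ (⊤ : ℕ∞) f) (he : f.Even) :
    ContDiff ℝ (⊤ : ℕ∞) fun x : ℝ × ℝ => f (nrm2 x) := by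
  simp only [nrm2_eq_norm_toLp]
  exact (contDiff_comp_norm_of_even hf he).comp contDiff_toLp

lemma contDiffAt_nrm2 {x : ℝ × ℝ} (hx : x ≠ 0) : ContDiffAt ℝ (⊤ : ℕ∞) nrm2 x := by
  rw [funext nrm2_eq_norm_toLp]
  exact contDiff_toLp.contDiffAt.norm ℝ (by simpa using hx)

lemma continuous_nrm2 : Continuous nrm2 := by
  unfold nrm2
  fun_prop

omit [CompleteSpace F] in
lemma contDiff_comp_nrm2_of_vanishing {E : Type*} [NormedAddCommGroup E] [NormedSpace ℝ E]
    {f : E × ℝ → F} (hf : ContDiff ℝ (⊤ : ℕ∞) f) {ε : ℝ} (hε : 0 < ε)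
    (h0 : ∀ p t, t < ε → f (p, t) = 0) :
    ContDiff ℝ (⊤ : ℕ∞) fun z : E × (ℝ × ℝ) => f (z.1, nrm2 z.2) := by
  rw [contDiff_iff_contDiffAt]
  rintro ⟨p, x⟩
  rcases eq_or_ne x 0 with rfl | hx
  · have hsmall : ∀ᶠ z : E × (ℝ × ℝ) in nhds (p, 0), nrm2 z.2 < ε :=
      (continuous_nrm2.comp continuous_snd).continuousAt.eventually_lt_const
        (by simpa [nrm2_zero] using hε)
    refine (contDiffAt_const (c := (0 : F))).congr_of_eventuallyEq ?_
    filter_upwards [hsmall] with z hz using h0 _ _ hz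
  · exact hf.contDiffAt.comp (p, x)
      (contDiffAt_fst.prodMk ((contDiffAt_nrm2 hx).comp (g := nrm2) (p, x) contDiffAt_snd))

end Radial

/-! ### The lattice gap and the main term -/

/-- The quantitative non-resonance condition on `Λ(a, q)` that the hypothesis on `μ_{M(w)}` becomes
in the normalised variables `T = Q^{1/2}`, `X = Q^δ`, `W = Q^{3/2} w`. -/
def LatticeGap (T X : ℝ) (q : ℕ) (a : ℤ × ℤ) (W : ℝ × ℝ) : Prop :=
  ∀ v ∈ Lambda a q, v ≠ 0 →
    X * (q * (1 + nrm2 W)) ≤ T * (nrm2 (toPlane v) + |dot2 W (perp2 (toPlane v))|)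

lemma muM_le_Mnorm (Q : ℝ) (w : ℝ × ℝ) {a v : ℤ × ℤ} {q : ℕ} (hv : v ∈ Lambda a q) (hv0 : v ≠ 0) :
    muM Q w a q ≤ Mnorm Q w (toPlane v) :=
  csInf_le ⟨0, by rintro _ ⟨v, -, -, rfl⟩; exact Real.sqrt_nonneg _⟩ ⟨v, hv, hv0, rfl⟩

lemma Mnorm_sq_le {T : ℝ} (hT : 0 < T) (w x : ℝ × ℝ) :
    Mnorm (T ^ 2) w x ≤ T⁻¹ * nrm2 x + T ^ 2 * |dot2 w (perp2 x)| := by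
  have hx := nrm2_nonneg x
  refine Real.sqrt_le_iff.2 ⟨by positivity, ?_⟩
  have hsq : nrm2 x ^ 2 = x.1 ^ 2 + x.2 ^ 2 := by rw [← dot2_self, dot2, sq, sq]
  have hdot : |dot2 w (perp2 x)| ^ 2 = (w.1 * x.2 - w.2 * x.1) ^ 2 := by
    rw [sq_abs, dot2, perp2]
    ring
  calc x.1 ^ 2 / T ^ 2 + x.2 ^ 2 / T ^ 2 + (T ^ 2) ^ 2 * (w.1 * x.2 - w.2 * x.1) ^ 2
      = (T⁻¹ * nrm2 x) ^ 2 + (T ^ 2 * |dot2 w (perp2 x)|) ^ 2 := by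
        rw [mul_pow, mul_pow, hsq, hdot]
        ring
    _ ≤ (T⁻¹ * nrm2 x + T ^ 2 * |dot2 w (perp2 x)|) ^ 2 := by
        rw [add_sq]
        have : 0 ≤ 2 * (T⁻¹ * nrm2 x) * (T ^ 2 * |dot2 w (perp2 x)|) := by positivity
        linarith

lemma latticeGap_of_le_muM {T X : ℝ} (hT : 0 < T) {q : ℕ} {a : ℤ × ℤ} {w : ℝ × ℝ}
    (h : X * (q * (T ^ 2)⁻¹ + nrm2 w * q * T) ≤ muM (T ^ 2) w a q) :
    LatticeGap T X q a (T ^ 3 • w) := fun v hv hv0 => by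
  have hle := (h.trans (muM_le_Mnorm _ w hv hv0)).trans (Mnorm_sq_le hT w (toPlane v))
  rw [nrm2_smul, dot2_smul_left, abs_mul, abs_of_pos (pow_pos hT 3)]
  calc X * (q * (1 + T ^ 3 * nrm2 w)) = T ^ 2 * (X * (q * (T ^ 2)⁻¹ + nrm2 w * q * T)) := by
        field_simp
    _ ≤ T ^ 2 * (T⁻¹ * nrm2 (toPlane v) + T ^ 2 * |dot2 w (perp2 (toPlane v))|) := by gcongr
    _ = T * (nrm2 (toPlane v) + T ^ 3 * |dot2 w (perp2 (toPlane v))|) := by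
        field_simp

lemma LatticeGap.le_one_add_nrm2 {T X : ℝ} {q : ℕ} {a : ℤ × ℤ} {W : ℝ × ℝ}
    (h : LatticeGap T X q a W) (hT : 0 < T) [NeZero q] {s : ℝ} (hs : |s| ≤ 1) {l : ℤ × ℤ}
    (hl : l ∈ Lambda a q) (hl0 : l ≠ 0) :
    X ≤ 1 + nrm2 ((T / q) • perp2 (toPlane l) + s • perp2 W) := by
  have hq : (0 : ℝ) < q := Nat.cast_pos.2 (NeZero.pos q)
  have hW := nrm2_nonneg W
  set ζ := (T / q) • perp2 (toPlane l) + s • perp2 W with hζ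
  have hnorm : T / q * nrm2 (toPlane l) ≤ nrm2 ζ + nrm2 W := by
    have hsub := nrm2_add_le ζ ((-s) • perp2 W)
    rw [hζ, neg_smul, add_neg_cancel_right, ← neg_smul, nrm2_smul, nrm2_smul, nrm2_perp2,
      nrm2_perp2, abs_neg, abs_of_pos (by positivity)] at hsub
    exact hsub.trans (by gcongr; exact mul_le_of_le_one_left hW hs)
  have hdot : T / q * |dot2 W (perp2 (toPlane l))| ≤ nrm2 W * nrm2 ζ := by
    have horth : dot2 W (perp2 W) = 0 := by simp only [dot2, perp2]; ring
    have hζW : dot2 W ζ = T / q * dot2 W (perp2 (toPlane l)) := by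
      rw [hζ, dot2_add_right, dot2_smul_right, dot2_smul_right, horth, mul_zero, add_zero]
    rw [← abs_of_pos (by positivity : 0 < T / q), ← abs_mul, ← hζW]
    exact abs_dot2_le W ζ
  refine le_of_mul_le_mul_right ?_ (by positivity : 0 < 1 + nrm2 W)
  calc X * (1 + nrm2 W) = X * (q * (1 + nrm2 W)) / q := by field_simp
    _ ≤ T * (nrm2 (toPlane l) + |dot2 W (perp2 (toPlane l))|) / q :=
        div_le_div_of_nonneg_right (h l hl hl0) hq.le
    _ = T / q * nrm2 (toPlane l) + T / q * |dot2 W (perp2 (toPlane l))| := by ring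
    _ ≤ (1 + nrm2 ζ) * (1 + nrm2 W) := by linarith

lemma norm_tsum_Lambda_twist_sub_integral_le {T X K s : ℝ} {q N : ℕ} [NeZero q] {a : ℤ × ℤ}
    (ha : Nat.gcd (Int.gcd a.1 a.2) q = 1) {W : ℝ × ℝ} (hgap : LatticeGap T X q a W)
    (hT : 1 ≤ T) (hX : 0 < X) (hs : |s| ≤ 1) {g : ℝ × ℝ → ℂ} (hg : ContDiff ℝ (⊤ : ℕ∞) g)
    (hgc : HasCompactSupport g) (hK : 0 ≤ K)
    (hdecay : ∀ ξ, ‖fourier2 g ξ‖ ≤ K / (1 + nrm2 ξ) ^ (N + 4)) :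
    ‖∑' r : Lambda a q, 𝐞 (-(s * dot2 W (perp2 (T⁻¹ • toPlane r)))) • g (T⁻¹ • toPlane r) -
        (T ^ 2 / q : ℝ) • ∫ x, 𝐞 (-(s * dot2 W (perp2 x))) • g x‖ ≤
      K * shiftedSumBound ^ 2 * T ^ 2 / X ^ N := by
  let η : ℝ × ℝ := (-s) • perp2 W
  have htwist : ∀ x, s * dot2 W (perp2 x) = dot2 x η := fun x => by
    rw [dot2_smul_right, dot2_comm x, dot2_perp2_left]
    ring
  have hsmooth : ContDiff ℝ (⊤ : ℕ∞) fun x => 𝐞 (-(dot2 x η)) • g x := by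
    simp only [Circle.smul_def, smul_eq_mul]
    refine (contDiff_fourierChar.comp (ContDiff.neg ?_)).mul hg
    unfold dot2
    fun_prop
  have hmain := norm_tsum_Lambda_sub_fourier2_zero_le ha hT η hsmooth hgc.smul_left hK hX
    (fun ξ => by rw [fourier2_fourierChar_smul]; exact hdecay _)
    (fun l hl hl0 => hgap.le_one_add_nrm2 (by linarith) (by rwa [abs_neg]) hl hl0)
  have hzero : ∀ f : ℝ × ℝ → ℂ, fourier2 f 0 = ∫ x, f x := fun f => by simp [fourier2, dot2]
  simpa only [htwist, hzero] using hmain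

section Marginal

variable {G : ℝ × (ℝ × ℝ) → ℂ}

lemma norm_tsum_integral_sub_le {ι : Type*} {p : ι → ℝ × ℝ} {B c : ℝ} (hG : Continuous G)
    (hGc : HasCompactSupport G) (hp : {i | p i ∈ Prod.snd '' tsupport G}.Finite)
    (hG1 : ∀ s x, 1 < |s| → G (s, x) = 0)
    (hB : ∀ s, |s| ≤ 1 → ‖∑' i, G (s, p i) - c • ∫ x, G (s, x)‖ ≤ B) :
    ‖(∑' i, ∫ s, G (s, p i)) - c • ∫ x, ∫ s, G (s, x)‖ ≤ 2 * B := by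
  have hint : Integrable G (volume.prod volume) := hG.integrable_of_hasCompactSupport hGc
  have hslice : ∀ x, Integrable fun s => G (s, x) := fun x =>
    (hG.comp (by fun_prop : Continuous fun s : ℝ => (s, x))).integrable_of_hasCompactSupport <|
      .intro (isCompact_Icc (a := -1) (b := 1)) fun s hs => hG1 s x <| by
        by_contra! h
        exact hs (abs_le.1 h)
  have hzero : ∀ i, i ∉ hp.toFinset → ∀ s, G (s, p i) = 0 := fun i hi s => by
    by_contra h
    exact hi (hp.mem_toFinset.2 ⟨_, subset_tsupport _ h, rfl⟩)
  have hmarginal : (∑' i, ∫ s, G (s, p i)) - c • ∫ x, ∫ s, G (s, x) =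
      ∫ s, (∑' i, G (s, p i) - c • ∫ x, G (s, x)) := by
    have hsum : ∀ s, ∑' i, G (s, p i) = ∑ i ∈ hp.toFinset, G (s, p i) := fun s =>
      tsum_eq_sum fun i hi => hzero i hi s
    have hright : Integrable fun s => c • ∫ x, G (s, x) := hint.integral_prod_left.smul c
    simp only [hsum]
    rw [tsum_eq_sum (s := hp.toFinset) fun i hi => by simp only [hzero i hi, integral_zero],
      integral_sub (integrable_finsetSum _ fun i _ => hslice (p i)) hright,
      integral_finsetSum _ fun i _ => hslice (p i), integral_smul,
      integral_integral_swap (f := fun s x => G (s, x)) hint]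
  have hvanish : ∀ s ∉ Set.Icc (-1 : ℝ) 1, ∑' i, G (s, p i) - c • ∫ x, G (s, x) = 0 := by
    intro s hs
    have hs' : ∀ x, G (s, x) = 0 := fun x => hG1 s x <| by
      by_contra! h
      exact hs (abs_le.1 h)
    simp only [hs', tsum_zero, integral_zero, smul_zero, sub_zero]
  rw [hmarginal, ← setIntegral_eq_integral_of_forall_compl_eq_zero hvanish]
  refine (norm_setIntegral_le_of_norm_le_const (s := Set.Icc (-1) 1) (C := B)
    (measure_Icc_lt_top) fun s hs => hB s (abs_le.2 hs)).trans_eq ?_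
  rw [Measure.real, Real.volume_Icc, ENNReal.toReal_ofReal (by norm_num)]
  ring

lemma exists_norm_tsum_Lambda_marginal_sub_le (hG : ContDiff ℝ (⊤ : ℕ∞) G)
    (hGc : HasCompactSupport G) (hG1 : ∀ s x, 1 < |s| → G (s, x) = 0) (N : ℕ) :
    ∃ C, 0 ≤ C ∧ ∀ (T X : ℝ) (q : ℕ) [NeZero q] (a : ℤ × ℤ) (W : ℝ × ℝ), 1 ≤ T → 0 < X →
      Nat.gcd (Int.gcd a.1 a.2) q = 1 → LatticeGap T X q a W →
      ‖(∑' r : Lambda a q, ∫ s, 𝐞 (-(s * dot2 W (perp2 (T⁻¹ • toPlane r)))) •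
            G (s, T⁻¹ • toPlane r)) -
          (T ^ 2 / q : ℝ) • ∫ x, ∫ s, 𝐞 (-(s * dot2 W (perp2 x))) • G (s, x)‖ ≤
        C * T ^ 2 / X ^ N := by
  obtain ⟨K, hK, hdecay⟩ := exists_norm_fourier2_slice_le hG hGc (N + 4)
  refine ⟨2 * (K * shiftedSumBound ^ 2), by positivity,
    fun T X q _ a W hT hX ha hgap => ?_⟩
  let G' : ℝ × (ℝ × ℝ) → ℂ := fun z => 𝐞 (-(z.1 * dot2 W (perp2 z.2))) • G z
  have hG' : Continuous G' := by
    refine (Real.continuous_fourierChar.comp ?_).smul hG.continuous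
    unfold dot2 perp2
    fun_prop
  have hGc' : HasCompactSupport G' := hGc.smul_left
  have hT0 : 0 < T := zero_lt_one.trans_le hT
  have hfin : {r : Lambda a q | T⁻¹ • toPlane r ∈ Prod.snd '' tsupport G'}.Finite :=
    Set.Finite.preimage (f := (Subtype.val : Lambda a q → ℤ × ℤ)) Subtype.val_injective.injOn
      (finite_smul_toPlane_mem (hGc'.isCompact.image continuous_snd) (inv_pos.2 hT0))
  have hslice : ∀ s, ContDiff ℝ (⊤ : ℕ∞) fun x => G (s, x) := fun s =>
    hG.comp (contDiff_const.prodMk contDiff_id)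
  refine (norm_tsum_integral_sub_le hG' hGc' hfin
    (fun s x hs => by simp only [G', hG1 s x hs, smul_zero])
    (B := K * shiftedSumBound ^ 2 * T ^ 2 / X ^ N) fun s hs =>
      norm_tsum_Lambda_twist_sub_integral_le ha hgap hT hX hs (hslice s)
        (hasCompactSupport_slice hGc s) hK (hdecay s)).trans_eq ?_
  ring

end Marginal

section MainTerm

variable {ω ω₀ : ℝ → ℝ}

/-- The summand `τ ↦ |τ|⁻¹ ω(|τ|) ω̂₀(W·τ^⊥ / |τ|)` of the main term, in the variable
`τ = r / T`. -/
noncomputable def mainTerm (ω ω₀ : ℝ → ℝ) (W τ : ℝ × ℝ) : ℂ :=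
  ((nrm2 τ)⁻¹ * ω (nrm2 τ) : ℝ) * fourierW0 ω₀ (dot2 W (perp2 τ) / nrm2 τ)

lemma eq_zero_of_le_half (hω : Function.support ω ⊆ Set.Ioo (1 / 2 : ℝ) 1) {t : ℝ}
    (ht : t ≤ 1 / 2) : ω t = 0 := by
  by_contra h
  exact absurd (hω h).1 ht.not_gt

lemma eq_zero_of_one_le (hω : Function.support ω ⊆ Set.Ioo (1 / 2 : ℝ) 1) {t : ℝ}
    (ht : 1 ≤ t) : ω t = 0 := by
  by_contra h
  exact absurd (hω h).2 ht.not_gt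

lemma mainTerm_eq_integral (hω : Function.support ω ⊆ Set.Ioo (1 / 2 : ℝ) 1) (W τ : ℝ × ℝ) :
    mainTerm ω ω₀ W τ = ∫ s : ℝ, 𝐞 (-(s * dot2 W (perp2 τ))) •
      ((ω (nrm2 τ) * ω₀ (nrm2 τ * s) : ℝ) : ℂ) := by
  rcases (nrm2_nonneg τ).eq_or_lt with h0 | h0
  · simp [mainTerm, ← h0, eq_zero_of_le_half hω (by norm_num : (0 : ℝ) ≤ 1 / 2)]
  · have hscale := fourier_comp_mul_left (fun x => (ω₀ x : ℂ)) h0 (dot2 W (perp2 τ))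
    rw [Real.fourier_real_eq, ← fourierW0_eq_fourier, Complex.real_smul] at hscale
    simp only [Complex.ofReal_mul, ← Complex.real_smul (x := ω _), smul_comm (𝐞 _) (ω _ : ℝ),
      integral_smul, hscale, mainTerm]
    rw [Complex.real_smul]
    ring

theorem exists_norm_tsum_Lambda_mainTerm_sub_le (hω_smooth : ContDiff ℝ (⊤ : ℕ∞) ω)
    (hω : Function.support ω ⊆ Set.Ioo (1 / 2 : ℝ) 1) (hω₀_smooth : ContDiff ℝ (⊤ : ℕ∞) ω₀)
    (hω₀ : Function.support ω₀ ⊆ Set.Ioo (-(1 / 2) : ℝ) (1 / 2)) (N : ℕ) :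
    ∃ C, 0 ≤ C ∧ ∀ (T X : ℝ) (q : ℕ) [NeZero q] (a : ℤ × ℤ) (W : ℝ × ℝ), 1 ≤ T → 0 < X →
      Nat.gcd (Int.gcd a.1 a.2) q = 1 → LatticeGap T X q a W →
      ‖∑' r : Lambda a q, mainTerm ω ω₀ W (T⁻¹ • toPlane r) -
          (T ^ 2 / q : ℝ) • ∫ τ, mainTerm ω ω₀ W τ‖ ≤ C * T ^ 2 / X ^ N := by
  let F : ℝ × ℝ → ℂ := fun z => ((ω z.2 * ω₀ (z.2 * z.1) : ℝ) : ℂ)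
  let G : ℝ × (ℝ × ℝ) → ℂ := fun z => F (z.1, nrm2 z.2)
  have hF : ContDiff ℝ (⊤ : ℕ∞) F := Complex.ofRealCLM.contDiff.comp
    ((hω_smooth.comp contDiff_snd).mul (hω₀_smooth.comp (contDiff_snd.mul contDiff_fst)))
  have hG : ContDiff ℝ (⊤ : ℕ∞) G :=
    contDiff_comp_nrm2_of_vanishing hF one_half_pos fun s t ht => by
      simp only [F, eq_zero_of_le_half hω ht.le, zero_mul, Complex.ofReal_zero]
  have hsupp : ∀ s x, G (s, x) ≠ 0 → |s| ≤ 1 ∧ nrm2 x ≤ 1 := fun s x h => by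
    simp only [G, F, ne_eq, Complex.ofReal_eq_zero, mul_eq_zero, not_or] at h
    have hx := hω h.1
    have hxs := abs_lt.2 (hω₀ h.2)
    rw [abs_mul, abs_of_pos (by linarith [hx.1])] at hxs
    exact ⟨by nlinarith [hx.1], hx.2.le⟩
  have hGc : HasCompactSupport G := .intro (isCompact_closedBall 0 1) fun z hz => by
    by_contra h
    obtain ⟨hs, hx⟩ := hsupp z.1 z.2 h
    exact hz (mem_closedBall_zero_iff.2 (norm_prod_le_iff.2 ⟨hs, (norm_le_nrm2 _).trans hx⟩))
  have hG1 : ∀ s x, 1 < |s| → G (s, x) = 0 := fun s x hs => by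
    by_contra h
    exact (hsupp s x h).1.not_gt hs
  simpa only [funext (mainTerm_eq_integral hω _), G, F] using
    exists_norm_tsum_Lambda_marginal_sub_le hG hGc hG1 N

end MainTerm

/-! ### The function `h` as an approximate delta function -/

lemma norm_mul_tsum_sub_integral_le {f : ℝ → ℂ} (hf : Continuous f) (hfc : HasCompactSupport f)
    {K : ℝ} {N : ℕ} (hdec : ∀ ξ, ‖𝓕 f ξ‖ ≤ K / (1 + |ξ|) ^ (N + 2)) {h : ℝ} (hh : 0 < h)
    (hh1 : h ≤ 1) :
    ‖h * ∑' j : ℤ, f (h * j) - ∫ x, f x‖ ≤ K * h ^ N * shiftedSumBound := by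
  have hT : 1 ≤ h⁻¹ := (one_le_inv₀ hh).2 hh1
  have hK : 0 ≤ K := by simpa using (norm_nonneg _).trans (hdec 0)
  have hρ : ∀ n : ℤ, 1 ≤ 1 + |h⁻¹ * (n + 0)| := fun n => le_add_of_nonneg_right (abs_nonneg _)
  have hF : ∀ n : ℤ, ‖𝓕 f (n / h)‖ ≤ K / (1 + |h⁻¹ * (n + 0)|) ^ (N + 2) := fun n => by
    simpa only [add_zero, div_eq_inv_mul] using hdec (n / h)
  have hs : Summable fun n : ℤ => 𝓕 f (n / h) :=
    .of_norm_bounded ((summable_one_div_shift hT 0).mul_left K) fun n => (hF n).trans <| by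
      rw [mul_one_div]
      have := hρ n
      gcongr
      omega
  have hgap : ∀ n : ℤ, n ≠ 0 → h⁻¹ ≤ 1 + |h⁻¹ * (n + 0)| := fun n hn => by
    rw [add_zero, abs_mul, abs_of_pos (inv_pos.2 hh)]
    have hn1 : (1 : ℝ) ≤ |(n : ℝ)| := mod_cast Int.one_le_abs hn
    linarith [le_mul_of_one_le_right (inv_pos.2 hh).le hn1]
  have hpoisson : ∑' j : ℤ, f (h * j) = (h⁻¹ : ℝ) • ∑' n : ℤ, 𝓕 f (n / h) := by
    rw [tsum_eq_tsum_fourier (f := fun x => f (h * x)) (by fun_prop)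
      (hfc.comp_homeomorph (Homeomorph.mulLeft₀ h hh.ne'))
      (by simpa only [fourier_comp_mul_left f hh] using hs.const_smul _)]
    simp only [fourier_comp_mul_left f hh, hs.tsum_const_smul]
  have hzero : 𝓕 f ((0 : ℤ) / h) = ∫ x, f x := by simp [Real.fourier_real_eq]
  rw [hpoisson, ← Complex.real_smul, smul_inv_smul₀ hh.ne', ← hzero]
  refine (norm_tsum_sub_le_of_decay hρ (summable_one_div_shift hT 0) hK (inv_pos.2 hh) hF
    hgap).trans ?_
  rw [inv_pow, div_inv_eq_mul]
  gcongr
  exact tsum_one_div_shift_le hT 0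

lemma tsum_comp_mul_eq_add_sum {f : ℝ → ℂ} {R h : ℝ} {J : ℕ} (hf : ∀ u, R ≤ |u| → f u = 0)
    (hh : 0 ≤ h) (hJ : R ≤ h * (J + 1)) :
    ∑' j : ℤ, f (h * j) =
      f 0 + ∑ n ∈ Finset.range J, (f (h * (n + 1)) + f (-(h * (n + 1)))) := by
  have hlarge : ∀ n : ℕ, n ∉ Finset.range J → R ≤ |h * ((n : ℝ) + 1)| := fun n hn => by
    have hn' : (J : ℝ) ≤ n := by simpa using hn
    refine hJ.trans (le_trans ?_ (le_abs_self _))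
    gcongr
  have hpos : ∀ n : ℕ, n ∉ Finset.range J → f (h * ((n + 1 : ℤ) : ℝ)) = 0 := fun n hn =>
    hf _ (by simpa using hlarge n hn)
  have hneg : ∀ n : ℕ, n ∉ Finset.range J → f (h * ((-(n + 1) : ℤ) : ℝ)) = 0 := fun n hn =>
    hf _ (by rw [Int.cast_neg, mul_neg, abs_neg]; simpa using hlarge n hn)
  rw [tsum_of_add_one_of_neg_add_one (f := fun j : ℤ => f (h * j))
    (summable_of_ne_finset_zero hpos) (summable_of_ne_finset_zero hneg), tsum_eq_sum hpos,
    tsum_eq_sum hneg, Finset.sum_add_distrib]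
  push_cast
  rw [mul_zero]
  simp only [mul_neg]
  ring

section HFun

variable {ω : ℝ → ℝ} (hω_supp : Function.support ω ⊆ Set.Ioo (1 / 2 : ℝ) 1)

include hω_supp

lemma hasCompactSupport_of_support_subset_Ioo : HasCompactSupport ω :=
  .intro isCompact_Icc fun _ ht => Function.notMem_support.1 fun h =>
    ht (Set.Ioo_subset_Icc_self (hω_supp h))

lemma hasCompactSupport_ofReal_of_support_subset_Ioo : HasCompactSupport fun t => (ω t : ℂ) :=
  (hasCompactSupport_of_support_subset_Ioo hω_supp).comp_left Complex.ofReal_zero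

lemma hFun_eq_sum_range {y z : ℝ} {J : ℕ} (hy : 0 < y) (hz : |z| ≤ 1 / 2)
    (hJ : 1 ≤ y * (J + 1)) :
    hFun ω y z = ∑ n ∈ Finset.range J, (1 / (y * (n + 1))) *
      (ω (y * (n + 1)) - ω (|z| / (y * (n + 1)))) := by
  rw [hFun, tsum_pnat_eq_tsum_succ (f := fun n : ℕ => (1 / (y * (n : ℝ))) *
    (ω (y * (n : ℝ)) - ω (|z| / (y * (n : ℝ))))), tsum_eq_sum (s := Finset.range J)]
  · push_cast
    rfl
  · intro n hn
    have hn' : (J : ℝ) ≤ n := by simpa using hn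
    have hlarge : 1 ≤ y * ((n + 1 : ℕ) : ℝ) := by
      push_cast
      exact hJ.trans (by gcongr)
    rw [eq_zero_of_one_le hω_supp hlarge,
      eq_zero_of_le_half hω_supp ((div_le_self (abs_nonneg z) hlarge).trans hz), sub_zero, mul_zero]

lemma apply_abs_eq_add (z : ℝ) : ω |z| = ω z + ω (-z) := by
  rcases le_total 0 z with hz | hz
  · rw [abs_of_nonneg hz, eq_zero_of_le_half hω_supp (t := -z) (by linarith), add_zero]
  · rw [abs_of_nonpos hz, eq_zero_of_le_half hω_supp (t := z) (by linarith), zero_add]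

lemma contDiff_div_self (hω : ContDiff ℝ (⊤ : ℕ∞) ω) :
    ContDiff ℝ (⊤ : ℕ∞) fun t => ω t / t := by
  refine contDiff_iff_contDiffAt.2 fun t => ?_
  rcases eq_or_ne t 0 with rfl | ht
  · refine (contDiffAt_const (c := (0 : ℝ))).congr_of_eventuallyEq ?_
    filter_upwards [Iio_mem_nhds one_half_pos] with t ht
    rw [eq_zero_of_le_half hω_supp (Set.mem_Iio.1 ht).le, zero_div]
  · exact hω.contDiffAt.div contDiffAt_id ht

lemma hasCompactSupport_div_self : HasCompactSupport fun t => ((ω t / t : ℝ) : ℂ) := by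
  simp only [div_eq_mul_inv, Complex.ofReal_mul]
  exact (hasCompactSupport_ofReal_of_support_subset_Ioo hω_supp).mul_right

lemma tsum_div_self_eq_sum {y : ℝ} (hy : 0 < y) {J : ℕ} (hJ : 1 ≤ y * (J + 1)) :
    ∑' j : ℤ, ((ω (y * j) / (y * j) : ℝ) : ℂ) =
      ∑ n ∈ Finset.range J, ((ω (y * (n + 1)) / (y * (n + 1)) : ℝ) : ℂ) := by
  have hvanish : ∀ t : ℝ, 1 ≤ |t| → ((ω t / t : ℝ) : ℂ) = 0 := fun t ht => by
    rcases le_abs.1 ht with h | h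
    · simp [eq_zero_of_one_le hω_supp h]
    · simp [eq_zero_of_le_half hω_supp (t := t) (by linarith)]
  have hneg : ∀ n : ℕ, ω (-(y * ((n : ℝ) + 1))) = 0 := fun n =>
    eq_zero_of_le_half hω_supp (by linarith [show 0 < y * ((n : ℝ) + 1) by positivity])
  simpa only [hneg, zero_div, div_zero, Complex.ofReal_zero, add_zero, zero_add] using
    tsum_comp_mul_eq_add_sum hvanish hy.le hJ

variable {Φ : ℝ → ℂ} (hΦ_supp : ∀ u, 1 / 2 ≤ |u| → Φ u = 0)

include hΦ_supp in
lemma mul_riemann_sum_sub_eq {y : ℝ} (hy : 0 < y) {J : ℕ} (hJ : 1 ≤ y * (J + 1)) (v : ℝ) :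
    ((ω v * (v * y)⁻¹ : ℝ) : ℂ) *
        (((v * y : ℝ) : ℂ) * ∑' j : ℤ, Φ (v * y * j) - ∫ u, Φ u) =
      (ω v : ℂ) * Φ 0 + (ω v : ℂ) * ∑ n ∈ Finset.range J,
          (Φ (v * y * (n + 1)) + Φ (-(v * y * (n + 1)))) -
        ((ω v / v : ℝ) : ℂ) * ((y⁻¹ : ℝ) * ∫ u, Φ u) := by
  by_cases hv : ω v = 0
  · simp [hv]
  · have hv_half : 1 / 2 < v := (hω_supp hv).1
    have hv_pos : 0 < v := one_half_pos.trans hv_half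
    have hmesh : 1 / 2 ≤ v * y * (J + 1) := by nlinarith
    rw [tsum_comp_mul_eq_add_sum hΦ_supp (by positivity) hmesh]
    have hy' : (y : ℂ) ≠ 0 := mod_cast hy.ne'
    have hv' : (v : ℂ) ≠ 0 := mod_cast hv_pos.ne'
    push_cast
    field_simp

lemma integral_mul_apply_abs_div (hω : Continuous ω) (hΦ : Continuous Φ) {t : ℝ} (ht : 0 < t) :
    (t⁻¹ : ℝ) * ∫ u, Φ u * (ω (|u| / t) : ℂ) =
      ∫ v, (ω v : ℂ) * (Φ (v * t) + Φ (-(v * t))) := by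
  have hωc := hasCompactSupport_ofReal_of_support_subset_Ioo hω_supp
  have hpos : Integrable fun v => (ω v : ℂ) * Φ (v * t) :=
    Continuous.integrable_of_hasCompactSupport (by fun_prop) hωc.mul_right
  have hneg : Integrable fun v => (ω v : ℂ) * Φ (-(v * t)) :=
    Continuous.integrable_of_hasCompactSupport (by fun_prop) hωc.mul_right
  have hunfold : ∀ v : ℝ, Φ (v * t) * (ω (|v * t| / t) : ℂ) =
      (ω v : ℂ) * Φ (v * t) + (ω (-v) : ℂ) * Φ (-(-v * t)) := fun v => by
    rw [abs_mul, abs_of_pos ht, mul_div_cancel_right₀ _ ht.ne', apply_abs_eq_add hω_supp,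
      neg_mul, neg_neg]
    push_cast
    ring
  have hsub := Measure.integral_comp_mul_right (fun u => Φ u * (ω (|u| / t) : ℂ)) t
  rw [abs_of_pos (inv_pos.2 ht), Complex.real_smul] at hsub
  simp only [← hsub, hunfold, mul_add]
  rw [integral_add hpos hneg.comp_neg, integral_add hpos hneg,
    integral_neg_eq_self (fun v => (ω v : ℂ) * Φ (-(v * t)))]

include hΦ_supp

lemma integral_mul_hFun_eq_sum (hω : Continuous ω) (hΦ : Continuous Φ) {y : ℝ}
    (hy : 0 < y) {J : ℕ} (hJ : 1 ≤ y * (J + 1)) :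
    ∫ u, Φ u * (hFun ω y u : ℂ) =
      ((∑ n ∈ Finset.range J, ((ω (y * (n + 1)) / (y * (n + 1)) : ℝ) : ℂ)) * ∫ u, Φ u) -
        ∫ v, (ω v : ℂ) *
          ∑ n ∈ Finset.range J, (Φ (v * y * (n + 1)) + Φ (-(v * y * (n + 1)))) := by
  have hΦc : HasCompactSupport Φ := .intro isCompact_Icc fun u hu =>
    hΦ_supp u (not_lt.1 fun h => hu (abs_le.1 h.le))
  have hωc := hasCompactSupport_ofReal_of_support_subset_Ioo hω_supp
  have hunfold : ∀ u, Φ u * (hFun ω y u : ℂ) = ∑ n ∈ Finset.range J,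
      (((ω (y * (n + 1)) / (y * (n + 1)) : ℝ) : ℂ) * Φ u -
        ((y * (n + 1))⁻¹ : ℝ) * (Φ u * (ω (|u| / (y * (n + 1))) : ℂ))) := fun u => by
    rcases le_or_gt (1 / 2) |u| with hu | hu
    · simp [hΦ_supp u hu]
    · rw [hFun_eq_sum_range hω_supp hy hu.le hJ, Complex.ofReal_sum, Finset.mul_sum]
      refine Finset.sum_congr rfl fun n _ => ?_
      push_cast
      ring
  have hΦi : Integrable Φ := hΦ.integrable_of_hasCompactSupport hΦc
  have hΦωi : ∀ t : ℝ, Integrable fun u => Φ u * (ω (|u| / t) : ℂ) := fun t =>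
    Continuous.integrable_of_hasCompactSupport (by fun_prop) hΦc.mul_right
  simp only [hunfold, Finset.mul_sum]
  have hterm : ∀ n : ℕ, Integrable fun u => ((ω (y * (n + 1)) / (y * (n + 1)) : ℝ) : ℂ) * Φ u -
      ((y * (n + 1))⁻¹ : ℝ) * (Φ u * (ω (|u| / (y * (n + 1))) : ℂ)) := fun n =>
    (hΦi.const_mul _).sub ((hΦωi _).const_mul _)
  have hterm' : ∀ n : ℕ, Integrable fun v => (ω v : ℂ) *
      (Φ (v * y * (n + 1)) + Φ (-(v * y * (n + 1)))) := fun n =>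
    Continuous.integrable_of_hasCompactSupport (by fun_prop) hωc.mul_right
  rw [integral_finsetSum _ fun n _ => hterm n, integral_finsetSum _ fun n _ => hterm' n,
    Finset.sum_mul, ← Finset.sum_sub_distrib]
  refine Finset.sum_congr rfl fun n _ => ?_
  rw [integral_sub (hΦi.const_mul _) ((hΦωi _).const_mul _), integral_const_mul,
    integral_const_mul, integral_mul_apply_abs_div hω_supp hω hΦ (by positivity)]
  simp only [mul_assoc]

/-- Both sums over `j` in `h` become Riemann sums, with meshes `y` and `v y`; the missing term
`j = 0` of the second one produces `Φ 0`. -/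
lemma integral_mul_hFun_sub_eq (hω : ContDiff ℝ (⊤ : ℕ∞) ω) (hΦ : Continuous Φ) {y : ℝ}
    (hy : 0 < y) (hω_int : ∫ t, ω t = 1) :
    (∫ u, Φ u * (hFun ω y u : ℂ)) - Φ 0 =
      (y⁻¹ : ℝ) * ((y * ∑' j : ℤ, ((ω (y * j) / (y * j) : ℝ) : ℂ) -
          ∫ t, ((ω t / t : ℝ) : ℂ)) * ∫ u, Φ u) -
        ∫ v, ((ω v * (v * y)⁻¹ : ℝ) : ℂ) *
          (((v * y : ℝ) : ℂ) * ∑' j : ℤ, Φ (v * y * j) - ∫ u, Φ u) := by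
  obtain ⟨J, hJ⟩ : ∃ J : ℕ, 1 ≤ y * ((J : ℝ) + 1) :=
    ⟨⌈y⁻¹⌉₊, by nlinarith [Nat.le_ceil y⁻¹, mul_inv_cancel₀ hy.ne']⟩
  have hωc := hasCompactSupport_ofReal_of_support_subset_Ioo hω_supp
  have hωi : Integrable fun v => (ω v : ℂ) := Complex.continuous_ofReal.comp hω.continuous
    |>.integrable_of_hasCompactSupport hωc
  have := hω.continuous
  have hωΦi : Integrable fun v => (ω v : ℂ) * ∑ n ∈ Finset.range J,
      (Φ (v * y * (n + 1)) + Φ (-(v * y * (n + 1)))) :=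
    Continuous.integrable_of_hasCompactSupport (by fun_prop) hωc.mul_right
  have hκi : Integrable fun v => ((ω v / v : ℝ) : ℂ) :=
    (Complex.continuous_ofReal.comp (contDiff_div_self hω_supp hω).continuous)
      |>.integrable_of_hasCompactSupport (hasCompactSupport_div_self hω_supp)
  simp only [mul_riemann_sum_sub_eq hω_supp hΦ_supp hy hJ]
  have hsum : Integrable fun v => (ω v : ℂ) * Φ 0 + (ω v : ℂ) * ∑ n ∈ Finset.range J,
      (Φ (v * y * (n + 1)) + Φ (-(v * y * (n + 1)))) := (hωi.mul_const _).add hωΦi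
  rw [integral_sub hsum (hκi.mul_const _),
    integral_add (hωi.mul_const _) hωΦi, integral_mul_const, integral_mul_const,
    integral_complex_ofReal (f := ω), hω_int,
    integral_mul_hFun_eq_sum hω_supp hΦ_supp hω.continuous hΦ hy hJ,
    tsum_div_self_eq_sum hω_supp hy hJ]
  have hy' : (y : ℂ) ≠ 0 := mod_cast hy.ne'
  push_cast
  field_simp
  ring

lemma norm_mul_riemann_sum_sub_le (hΦ : Continuous Φ) {L : ℝ} {N : ℕ}
    (hL : ∀ ξ, ‖𝓕 Φ ξ‖ ≤ L / (1 + |ξ|) ^ (N + 2)) {y : ℝ} (hy : 0 < y) (hy1 : y ≤ 1) (v : ℝ) :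
    ‖((ω v * (v * y)⁻¹ : ℝ) : ℂ) *
        (((v * y : ℝ) : ℂ) * ∑' j : ℤ, Φ (v * y * j) - ∫ u, Φ u)‖ ≤
      2 / y * (L * y ^ N * shiftedSumBound) * |ω v| := by
  have hL0 : 0 ≤ L := by simpa using (norm_nonneg _).trans (hL 0)
  have hS := shiftedSumBound_nonneg
  have hΦc : HasCompactSupport Φ := .intro isCompact_Icc fun u hu =>
    hΦ_supp u (not_lt.1 fun h => hu (abs_le.1 h.le))
  by_cases hv : ω v = 0
  · simp [hv]
  · have hv_half : 1 / 2 < v := (hω_supp hv).1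
    have hv_pos : 0 < v := one_half_pos.trans hv_half
    have hvy : v * y ≤ y := mul_le_of_le_one_left hy.le (hω_supp hv).2.le
    have hinv : (v * y)⁻¹ ≤ 2 / y := by
      rw [inv_eq_one_div, div_le_div_iff₀ (by positivity) hy]
      nlinarith
    have hriemann := norm_mul_tsum_sub_integral_le hΦ hΦc hL (mul_pos hv_pos hy) (hvy.trans hy1)
    rw [norm_mul, Complex.norm_real, Real.norm_eq_abs, abs_mul,
      abs_of_pos (inv_pos.2 (mul_pos hv_pos hy)), mul_comm, mul_comm |ω v|, ← mul_assoc,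
      mul_comm (2 / y)]
    gcongr
    exact hriemann.trans (by gcongr)

lemma norm_integral_mul_hFun_sub_le (hω : ContDiff ℝ (⊤ : ℕ∞) ω) (hΦ : Continuous Φ)
    (hω_int : ∫ t, ω t = 1) {M L : ℝ} {N : ℕ}
    (hM : ∀ ξ, ‖𝓕 (fun t => ((ω t / t : ℝ) : ℂ)) ξ‖ ≤ M / (1 + |ξ|) ^ (N + 2))
    (hL : ∀ ξ, ‖𝓕 Φ ξ‖ ≤ L / (1 + |ξ|) ^ (N + 2)) {y : ℝ} (hy : 0 < y) (hy1 : y ≤ 1) :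
    ‖(∫ u, Φ u * (hFun ω y u : ℂ)) - Φ 0‖ ≤
      L * (M + 2 * ∫ t, |ω t|) * shiftedSumBound * (y ^ N / y) := by
  have hI : ‖∫ u, Φ u‖ ≤ L := by simpa [Real.fourier_real_eq] using hL 0
  have hκ := norm_mul_tsum_sub_integral_le
    (Complex.continuous_ofReal.comp (contDiff_div_self hω_supp hω).continuous)
    (hasCompactSupport_div_self hω_supp) hM hy hy1
  have hωi : Integrable fun v => |ω v| :=
    (hω.continuous.integrable_of_hasCompactSupport
      (hasCompactSupport_of_support_subset_Ioo hω_supp)).abs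
  rw [integral_mul_hFun_sub_eq hω_supp hΦ_supp hω hΦ hy hω_int]
  refine (norm_sub_le _ _).trans ((add_le_add (b := y⁻¹ * (M * y ^ N * shiftedSumBound * L)) ?_
    (norm_integral_le_of_norm_le (hωi.const_mul _) (.of_forall
      (norm_mul_riemann_sum_sub_le hω_supp hΦ_supp hΦ hL hy hy1)))).trans_eq ?_)
  · rw [norm_mul, norm_mul, Complex.norm_real, Real.norm_of_nonneg (inv_pos.2 hy).le]
    have := (norm_nonneg _).trans hκ
    gcongr
    exact hκ
  · rw [integral_const_mul]
    field_simp

lemma norm_integral_mul_hFun_mul_sub_le (hω : ContDiff ℝ (⊤ : ℕ∞) ω) (hΦ : Continuous Φ)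
    (hω_int : ∫ t, ω t = 1) {M L : ℝ} {N : ℕ}
    (hM : ∀ ξ, ‖𝓕 (fun t => ((ω t / t : ℝ) : ℂ)) ξ‖ ≤ M / (1 + |ξ|) ^ (N + 2))
    (hL : ∀ ξ, ‖𝓕 Φ ξ‖ ≤ L / (1 + |ξ|) ^ (N + 2)) {y ρ : ℝ} (hy : 0 < y) (hy1 : y ≤ 1)
    (hρ : 1 / 2 ≤ ρ) (hρ1 : ρ ≤ 1) :
    ‖(∫ u, Φ u * (hFun ω y (ρ * u) : ℂ)) - (ρ⁻¹ : ℝ) * Φ 0‖ ≤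
      2 ^ (N + 3) * L * (M + 2 * ∫ t, |ω t|) * shiftedSumBound * (y ^ N / y) := by
  have hρ0 : 0 < ρ := one_half_pos.trans_le hρ
  have hL0 : 0 ≤ L := by simpa using (norm_nonneg _).trans (hL 0)
  have hvanish : ∀ u, 1 / 2 ≤ |u| → Φ (ρ⁻¹ * u) = 0 := fun u hu => hΦ_supp _ <| by
    rw [abs_mul, abs_of_pos (inv_pos.2 hρ0)]
    exact hu.trans (le_mul_of_one_le_left (abs_nonneg u) ((one_le_inv₀ hρ0).2 hρ1))
  have hdecay : ∀ ξ, ‖𝓕 (fun u => Φ (ρ⁻¹ * u)) ξ‖ ≤ 2 ^ (N + 2) * L / (1 + |ξ|) ^ (N + 2) := by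
    intro ξ
    rw [fourier_comp_mul_left Φ (inv_pos.2 hρ0), inv_inv, div_inv_eq_mul, norm_smul,
      Real.norm_of_nonneg hρ0.le]
    refine (mul_le_of_le_one_left (norm_nonneg _) hρ1).trans ((hL _).trans ?_)
    have hscale : 1 + |ξ| ≤ 2 * (1 + |ξ * ρ|) := by
      rw [abs_mul, abs_of_pos hρ0]
      nlinarith [abs_nonneg ξ]
    rw [div_le_div_iff₀ (by positivity) (by positivity), mul_comm _ L, mul_assoc, ← mul_pow]
    gcongr
  have hsub := Measure.integral_comp_mul_left (fun u => Φ (ρ⁻¹ * u) * (hFun ω y u : ℂ)) ρ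
  simp only [inv_mul_cancel_left₀ hρ0.ne', abs_of_pos (inv_pos.2 hρ0), Complex.real_smul] at hsub
  have hcore := norm_integral_mul_hFun_sub_le hω_supp hvanish hω
    (hΦ.comp (continuous_const_mul _)) hω_int hM hdecay hy hy1
  rw [mul_zero] at hcore
  rw [hsub, ← mul_sub, norm_mul, Complex.norm_real, Real.norm_of_nonneg (inv_pos.2 hρ0).le]
  calc ρ⁻¹ * ‖(∫ u, Φ (ρ⁻¹ * u) * (hFun ω y u : ℂ)) - Φ 0‖ ≤ 2 * (2 ^ (N + 2) * L *
        (M + 2 * ∫ t, |ω t|) * shiftedSumBound * (y ^ N / y)) := by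
        gcongr
        exact inv_le_of_inv_le₀ two_pos (by linarith)
    _ = _ := by ring

end HFun

section PlaneHFun

lemma comp_nrm2_zero_mk {f : ℝ → ℝ} (hf : f.Even) (s : ℝ) : f (nrm2 (0, s)) = f s := by
  rw [nrm2, zero_pow two_ne_zero, zero_add, Real.sqrt_sq_eq_abs]
  rcases abs_choice s with h | h <;> rw [h]
  exact hf s

variable {ω ω₀ : ℝ → ℝ} (hω_supp : Function.support ω ⊆ Set.Ioo (1 / 2 : ℝ) 1)

include hω_supp in
lemma exists_continuous_eq_hFun_mul (hω : Continuous ω) {y ρ : ℝ} (hy : 0 < y) (hρ : 0 ≤ ρ)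
    (hρ1 : ρ ≤ 1) :
    ∃ k : ℝ → ℂ, Continuous k ∧ ∀ u, |u| < 1 / 2 → (hFun ω y (ρ * u) : ℂ) = k u := by
  obtain ⟨J, hJ⟩ : ∃ J : ℕ, 1 ≤ y * ((J : ℝ) + 1) :=
    ⟨⌈y⁻¹⌉₊, by nlinarith [Nat.le_ceil y⁻¹, mul_inv_cancel₀ hy.ne']⟩
  refine ⟨fun u => ((∑ n ∈ Finset.range J, (1 / (y * (n + 1))) *
    (ω (y * (n + 1)) - ω (|ρ * u| / (y * (n + 1)))) : ℝ) : ℂ), by fun_prop, fun u hu => ?_⟩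
  have hρu : |ρ * u| ≤ 1 / 2 := by
    rw [abs_mul, abs_of_nonneg hρ]
    exact (mul_le_of_le_one_left (abs_nonneg u) hρ1).trans hu.le
  simp only [hFun_eq_sum_range hω_supp hy hρu hJ]

lemma fourier2_mul_eq_integral {g : ℝ × ℝ → ℂ} {k h : ℝ → ℂ} {R : ℝ} (hg : Continuous g)
    (hgc : HasCompactSupport g) (hg_supp : ∀ x, R ≤ |x.1| → g x = 0) (hk : Continuous k)
    (hkh : ∀ u, |u| < R → h u = k u) (η : ℝ × ℝ) :
    fourier2 (fun x => g x * h x.1) η =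
      ∫ u, 𝐞 (-(u * η.1)) • 𝓕 (fun s => g (u, s)) η.2 * h u := by
  have heq : ∀ u s, g (u, s) * h u = g (u, s) * k u := fun u s => by
    rcases le_or_gt R |u| with hu | hu
    · rw [hg_supp _ hu, zero_mul, zero_mul]
    · rw [hkh u hu]
  have hgk : Continuous fun x : ℝ × ℝ => g x * k x.1 := by fun_prop
  rw [funext fun x : ℝ × ℝ => heq x.1 x.2, fourier2_eq_fourier_fourier hgk hgc.mul_right,
    Real.fourier_real_eq]
  refine integral_congr_ae (.of_forall fun u => ?_)
  simp only [Real.fourier_real_eq, Circle.smul_def, smul_eq_mul, mul_assoc,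
    ← integral_mul_const, heq]

lemma one_add_abs_mul_le_of_add (α β ξ : ℝ) :
    (1 + |ξ|) * (1 + |β|) ≤ (1 + |α|) * (1 + nrm2 (ξ + α, β)) ^ 2 := by
  have hnonneg := nrm2_nonneg (ξ + α, β)
  have hα := abs_fst_le_nrm2 (ξ + α, β)
  have hβ := abs_snd_le_nrm2 (ξ + α, β)
  have htri : |ξ| ≤ |ξ + α| + |α| := by simpa using abs_sub (ξ + α) α
  calc (1 + |ξ|) * (1 + |β|) ≤ ((1 + |α|) * (1 + |ξ + α|)) * (1 + |β|) := by
        gcongr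
        nlinarith [abs_nonneg α, abs_nonneg (ξ + α)]
    _ ≤ ((1 + |α|) * (1 + nrm2 (ξ + α, β))) * (1 + nrm2 (ξ + α, β)) := by
        gcongr
    _ = _ := by ring

lemma fourier_twisted_slice {g : ℝ × ℝ → ℂ} (hg : Continuous g) (hgc : HasCompactSupport g)
    (η : ℝ × ℝ) (ξ : ℝ) :
    𝓕 (fun u => 𝐞 (-(u * η.1)) • 𝓕 (fun s => g (u, s)) η.2) ξ = fourier2 g (ξ + η.1, η.2) := by
  rw [fourier2_eq_fourier_fourier hg hgc]
  simp only [Real.fourier_real_eq (E := ℂ) _ ξ, Real.fourier_real_eq (E := ℂ) _ (ξ + η.1),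
    smul_smul, ← AddChar.map_add_eq_mul, mul_add, neg_add]

lemma exists_norm_fourier_twisted_slice_le {g : ℝ × ℝ → ℂ} (hg : ContDiff ℝ (⊤ : ℕ∞) g)
    (hgc : HasCompactSupport g) (N : ℕ) :
    ∃ K, 0 ≤ K ∧ ∀ (η : ℝ × ℝ) (ξ : ℝ),
      ‖𝓕 (fun u => 𝐞 (-(u * η.1)) • 𝓕 (fun s => g (u, s)) η.2) ξ‖ ≤
        K * ((1 + |η.1|) / (1 + |η.2|)) ^ N / (1 + |ξ|) ^ N := by
  obtain ⟨K, hK, hdecay⟩ := exists_norm_fourier2_le hg hgc (2 * N)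
  refine ⟨K, hK, fun η ξ => ?_⟩
  have hnonneg := nrm2_nonneg (ξ + η.1, η.2)
  rw [fourier_twisted_slice hg.continuous hgc]
  refine (hdecay _).trans ?_
  rw [mul_div_assoc, ← div_pow, div_eq_mul_inv K, pow_mul, ← inv_pow]
  gcongr
  rw [div_div, inv_eq_one_div, div_le_div_iff₀ (by positivity) (by positivity), one_mul,
    mul_comm (1 + |η.2|)]
  exact one_add_abs_mul_le_of_add η.1 η.2 ξ

include hω_supp

/-- Integrating over the second coordinate first leaves the one-dimensional integral of the slice
transform against `h`, to which the approximate delta property applies. -/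
lemma exists_norm_fourier2_mul_hFun_sub_le {g : ℝ × ℝ → ℂ} (hω : ContDiff ℝ (⊤ : ℕ∞) ω)
    (hω_int : ∫ t, ω t = 1) (hg : ContDiff ℝ (⊤ : ℕ∞) g) (hgc : HasCompactSupport g)
    (hg_supp : ∀ x, 1 / 2 ≤ |x.1| → g x = 0) (N : ℕ) :
    ∃ K, 0 ≤ K ∧ ∀ (ρ y : ℝ) (η : ℝ × ℝ), 1 / 2 ≤ ρ → ρ ≤ 1 → 0 < y → y ≤ 1 →
      ‖fourier2 (fun x => g x * (hFun ω y (ρ * x.1) : ℂ)) η -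
          (ρ⁻¹ : ℝ) * 𝓕 (fun s => g (0, s)) η.2‖ ≤
        K * ((1 + |η.1|) / (1 + |η.2|)) ^ (N + 2) * (y ^ N / y) := by
  obtain ⟨M, hM0, hM⟩ := exists_norm_fourier_real_le
    (Complex.ofRealCLM.contDiff.comp (contDiff_div_self hω_supp hω))
    (hasCompactSupport_div_self hω_supp) (N + 2)
  obtain ⟨K, hK, hdecay⟩ := exists_norm_fourier_twisted_slice_le hg hgc (N + 2)
  have : 0 ≤ ∫ t, |ω t| := integral_nonneg fun _ => abs_nonneg _
  refine ⟨2 ^ (N + 3) * K * (M + 2 * ∫ t, |ω t|) * shiftedSumBound,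
    by have := shiftedSumBound_nonneg; positivity, fun ρ y η hρ hρ1 hy hy1 => ?_⟩
  let Φ : ℝ → ℂ := fun u => 𝐞 (-(u * η.1)) • 𝓕 (fun s => g (u, s)) η.2
  have hΦ : Continuous Φ := (Real.continuous_fourierChar.comp (by fun_prop)).smul
    (continuous_fourier_slice hg.continuous hgc η.2)
  have hΦ_supp : ∀ u, 1 / 2 ≤ |u| → Φ u = 0 := fun u hu => by
    simp [Φ, Real.fourier_real_eq, hg_supp (u, _) hu]
  have hΦ_zero : Φ 0 = 𝓕 (fun s => g (0, s)) η.2 := by simp [Φ]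
  obtain ⟨k, hk, hkh⟩ := exists_continuous_eq_hFun_mul hω_supp hω.continuous hy
    (by linarith : 0 ≤ ρ) hρ1
  rw [fourier2_mul_eq_integral (k := k) (h := fun u => (hFun ω y (ρ * u) : ℂ)) hg.continuous hgc
    hg_supp hk hkh, ← hΦ_zero]
  refine (norm_integral_mul_hFun_mul_sub_le hω_supp hΦ_supp hω hΦ hω_int hM (hdecay η) hy hy1 hρ
    hρ1).trans_eq ?_
  ring

lemma exists_norm_fourier2_radial_mul_hFun_sub_le (hω : ContDiff ℝ (⊤ : ℕ∞) ω)
    (hω_int : ∫ t, ω t = 1) (hω₀ : ContDiff ℝ (⊤ : ℕ∞) ω₀) (hω₀_even : ω₀.Even)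
    (hω₀_supp : Function.support ω₀ ⊆ Set.Ioo (-(1 / 2) : ℝ) (1 / 2)) (N : ℕ) :
    ∃ K, 0 ≤ K ∧ ∀ (ρ y : ℝ) (η : ℝ × ℝ), 1 / 2 ≤ ρ → ρ ≤ 1 → 0 < y → y ≤ 1 →
      ‖fourier2 (fun x => (ω₀ (nrm2 x) : ℂ) * (hFun ω y (ρ * x.1) : ℂ)) η -
          (ρ⁻¹ : ℝ) * fourierW0 ω₀ η.2‖ ≤
        K * ((1 + |η.1|) / (1 + |η.2|)) ^ (N + 2) * (y ^ N / y) := by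
  have hvanish : ∀ x, 1 / 2 ≤ nrm2 x → (ω₀ (nrm2 x) : ℂ) = 0 := fun x hx => by
    by_contra h
    exact (hω₀_supp (Complex.ofReal_ne_zero.1 h)).2.not_ge hx
  have hcompact : HasCompactSupport fun x => (ω₀ (nrm2 x) : ℂ) :=
    .intro (isCompact_closedBall 0 (1 / 2)) fun x hx => hvanish x <|
      (not_le.1 fun h => hx (mem_closedBall_zero_iff.2 h)).le.trans (norm_le_nrm2 x)
  simpa only [fourierW0_eq_fourier, comp_nrm2_zero_mk hω₀_even] using
    exists_norm_fourier2_mul_hFun_sub_le (g := fun x => (ω₀ (nrm2 x) : ℂ)) hω_supp hω hω_int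
      (Complex.ofRealCLM.contDiff.comp (contDiff_comp_nrm2_of_even hω₀ hω₀_even)) hcompact
      (fun x hx => hvanish x (hx.trans (abs_fst_le_nrm2 x))) N

end PlaneHFun

/-! ### The functions `p₂` and the sum over the lattice -/

/-- The reflection of the plane exchanging the unit vectors `z / |z|` and `(1, 0)`: in these
coordinates the function `x ↦ z · x` depends on `x.1` only. -/
noncomputable def reflect2 (z x : ℝ × ℝ) : ℝ × ℝ := (dot2 x z / nrm2 z, dot2 x (perp2 z) / nrm2 z)

lemma dot2_reflect2_comm (z x y : ℝ × ℝ) : dot2 x (reflect2 z y) = dot2 (reflect2 z x) y := by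
  simp only [reflect2, dot2, perp2]
  ring

lemma reflect2_smul (z x : ℝ × ℝ) (t : ℝ) : reflect2 z (t • x) = t • reflect2 z x := by
  simp only [reflect2, dot2_smul_left, mul_div_assoc, Prod.smul_mk, smul_eq_mul]

section Reflection

variable {z : ℝ × ℝ} (hz : z ≠ 0)

include hz

lemma nrm2_pos : 0 < nrm2 z := (nrm2_nonneg z).lt_of_ne' (nrm2_ne_zero hz)

lemma dot2_reflect2_self (x : ℝ × ℝ) : dot2 z (reflect2 z x) = nrm2 z * x.1 := by
  have hself : z.1 * z.1 + z.2 * z.2 = nrm2 z ^ 2 := dot2_self z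
  have hn := nrm2_ne_zero hz
  simp only [reflect2, dot2, perp2]
  field_simp
  linear_combination x.1 * hself

lemma nrm2_reflect2 (x : ℝ × ℝ) : nrm2 (reflect2 z x) = nrm2 x := by
  have hself : z.1 * z.1 + z.2 * z.2 = nrm2 z ^ 2 := dot2_self z
  have hn := nrm2_ne_zero hz
  have hdot : dot2 (reflect2 z x) (reflect2 z x) = dot2 x x := by
    simp only [reflect2, dot2, perp2]
    field_simp
    linear_combination (x.1 ^ 2 + x.2 ^ 2) * hself
  rw [← Real.sqrt_sq (nrm2_nonneg x), ← Real.sqrt_sq (nrm2_nonneg (reflect2 z x)), ← dot2_self,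
    hdot, dot2_self]

lemma integral_comp_reflect2 (F : ℝ × ℝ → ℂ) : ∫ x, F (reflect2 z x) = ∫ x, F x := by
  let f : (ℝ × ℝ) →ₗ[ℝ] (ℝ × ℝ) := Matrix.toLin (Module.Basis.finTwoProd ℝ)
    (Module.Basis.finTwoProd ℝ) ((nrm2 z)⁻¹ • !![z.1, z.2; z.2, -z.1])
  have hf : ⇑f = reflect2 z := by
    ext x <;> simp [f, reflect2, dot2, perp2] <;> ring
  have hdet : LinearMap.det f = -1 := by
    have hself : z.1 * z.1 + z.2 * z.2 = nrm2 z ^ 2 := dot2_self z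
    have hn := nrm2_ne_zero hz
    rw [LinearMap.det_toLin, Matrix.det_smul, Matrix.det_fin_two_of, Fintype.card_fin]
    field_simp
    linear_combination -hself
  have hemb : MeasurableEmbedding f := (LinearMap.equivOfDetNeZero f (by simp [hdet]))
    |>.toContinuousLinearEquiv.toHomeomorph.measurableEmbedding
  have hmap := hemb.integral_map (μ := volume) F
  rw [Measure.map_linearMap_addHaar_eq_smul_addHaar volume (by simp [hdet]), hdet] at hmap
  simpa [hf] using hmap.symm

end Reflection

lemma toPlane_ne_zero {r : ℤ × ℤ} (hr : r ≠ 0) : toPlane r ≠ 0 := by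
  simpa [Prod.ext_iff] using hr

lemma p2_eq_fourier2 (ω ω₀ : ℝ → ℝ) {T : ℝ} (hT : 0 < T) {r : ℤ × ℤ} (hr : r ≠ 0) (k : ℕ) (q : ℝ)
    (w : ℝ × ℝ) :
    p2 ω ω₀ (T ^ 2) r k q w = cConst ω * fourier2 (fun x => (ω₀ (nrm2 x) : ℂ) *
        (hFun ω (k * q / T ^ 2) (nrm2 (toPlane r) / T * x.1) : ℂ))
      (reflect2 (toPlane r) (T ^ 3 • w)) := by
  have hrz := toPlane_ne_zero hr
  have hT3 : (T ^ 2) ^ ((3 : ℝ) / 2) = T ^ 3 := by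
    rw [← Real.rpow_natCast T 2, ← Real.rpow_mul hT.le]
    norm_num
  set z := toPlane r
  set F : ℝ × ℝ → ℂ := fun x => ((ω₀ (nrm2 x / T ^ 3) *
    hFun ω (k * q / T ^ 2) (dot2 z x / (T ^ 2) ^ 2) : ℝ) : ℂ) * e2pi (-dot2 w x) with hF
  have hp2 : p2 ω ω₀ (T ^ 2) r k q w = (cConst ω / (T ^ 2) ^ 3 : ℝ) * ∫ x, F x := by
    simp only [p2, hT3, hF, dot2, z]
  have hreflect : ∀ x, F (T ^ 3 • reflect2 z x) = 𝐞 (-dot2 x (reflect2 z (T ^ 3 • w))) •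
      ((ω₀ (nrm2 x) : ℂ) * (hFun ω (k * q / T ^ 2) (nrm2 z / T * x.1) : ℂ)) := fun x => by
    have hphase : T ^ 3 * dot2 w (reflect2 z x) = dot2 x (reflect2 z (T ^ 3 • w)) := by
      rw [dot2_reflect2_comm, reflect2_smul, dot2_smul_right, dot2_comm x]
    simp only [hF, e2pi_eq_fourierChar, nrm2_smul, nrm2_reflect2 hrz, dot2_smul_right, hphase,
      dot2_reflect2_self hrz, abs_of_pos (pow_pos hT 3)]
    rw [mul_div_cancel_left₀ _ (pow_pos hT 3).ne', Circle.smul_def, smul_eq_mul, mul_comm]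
    push_cast
    congr! 4
    field_simp
  have hdilate := Measure.integral_comp_smul volume F (T ^ 3)
  rw [show Module.finrank ℝ (ℝ × ℝ) = 2 by simp, abs_of_pos (by positivity),
    ← integral_comp_reflect2 hrz fun x => F (T ^ 3 • x)] at hdilate
  simp only [hreflect] at hdilate
  rw [hp2, fourier2, hdilate, Complex.real_smul, ← mul_assoc]
  congr 1
  push_cast
  ring

lemma exists_kOf_smul_mem_Lambda {a r : ℤ × ℤ} {q : ℕ} (ha : Nat.gcd (Int.gcd a.1 a.2) q = 1)
    (hr : r ∈ Lambda a q) (hr0 : r ≠ 0) :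
    ∃ v ∈ Lambda a q, v ≠ 0 ∧ r = (kOf r q : ℤ) • v := by
  set g := Int.gcd r.1 r.2
  obtain ⟨s, hs⟩ : (g : ℤ) ∣ r.1 := Int.gcd_dvd_left _ _
  obtain ⟨t, ht⟩ : (g : ℤ) ∣ r.2 := Int.gcd_dvd_right _ _
  have hk : (kOf r q : ℤ) * (Nat.gcd g q : ℤ) = g :=
    mod_cast Nat.div_mul_cancel (Nat.gcd_dvd_left g q)
  have hrv : r = (kOf r q : ℤ) • ((Nat.gcd g q : ℤ) * s, (Nat.gcd g q : ℤ) * t) := by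
    ext
    · simp only [hs, ← hk, Prod.smul_fst, smul_eq_mul, mul_assoc]
    · simp only [ht, ← hk, Prod.smul_snd, smul_eq_mul, mul_assoc]
  refine ⟨_, (mem_Lambda_iff ha).2 ?_, fun h => hr0 (by rw [hrv, h, smul_zero]), hrv⟩
  have hg : (q : ℤ) ∣ g * (s * a.2 - t * a.1) := by
    have hdvd := (mem_Lambda_iff ha).1 hr
    rw [hs, ht] at hdvd
    convert hdvd using 1
    ring
  have hgcd : (q : ℤ) ∣ Nat.gcd g q * (s * a.2 - t * a.1) := by
    rw [Nat.gcd_eq_gcd_ab, add_mul, mul_right_comm, mul_right_comm (q : ℤ)]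
    exact dvd_add (hg.mul_right _) ((dvd_mul_right _ _).mul_right _)
  convert hgcd using 1
  ring

lemma one_le_kOf {r : ℤ × ℤ} (hr : r ≠ 0) (q : ℕ) : 1 ≤ kOf r q := by
  have hg : 0 < Int.gcd r.1 r.2 :=
    Int.gcd_pos_iff.2 (by simpa [Prod.ext_iff, or_iff_not_imp_left] using hr)
  exact Nat.div_pos (Nat.gcd_le_left _ hg) (Nat.gcd_pos_of_pos_left _ hg)

lemma toPlane_zsmul (k : ℤ) (v : ℤ × ℤ) : toPlane (k • v) = (k : ℝ) • toPlane v := by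
  ext <;> simp

namespace LatticeGap

variable {T X : ℝ} {q : ℕ} {a r : ℤ × ℤ} {W : ℝ × ℝ} (h : LatticeGap T X q a W)
  (ha : Nat.gcd (Int.gcd a.1 a.2) q = 1) (hT : 0 < T) (hr : r ∈ Lambda a q) (hr0 : r ≠ 0)
  (hrT : nrm2 (toPlane r) ≤ T)

include h ha hT hr hr0 hrT

lemma mul_kOf_mul_le : X * (kOf r q * q / T ^ 2) * (1 + nrm2 W) ≤
    1 + |(reflect2 (toPlane r) W).2| := by
  obtain ⟨v, hv, hv0, hrv⟩ := exists_kOf_smul_mem_Lambda ha hr hr0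
  have hn := nrm2_pos (toPlane_ne_zero hr0)
  set k := kOf r q
  set n := nrm2 (toPlane r) with hn_def
  change _ ≤ 1 + |dot2 W (perp2 (toPlane r)) / n|
  set β := dot2 W (perp2 (toPlane r)) / n with hβ
  have hnv : n = k * nrm2 (toPlane v) := by
    rw [hn_def, hrv, toPlane_zsmul, nrm2_smul, Int.cast_natCast, Nat.abs_cast]
  have hβv : n * |β| = k * |dot2 W (perp2 (toPlane v))| := by
    rw [hβ, abs_div, abs_of_pos hn, mul_div_cancel₀ _ hn.ne', hrv, toPlane_zsmul, perp2_smul,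
      dot2_smul_right, abs_mul, Int.cast_natCast, Nat.abs_cast]
  refine le_of_mul_le_mul_left ?_ (pow_pos hT 2)
  calc T ^ 2 * (X * (k * q / T ^ 2) * (1 + nrm2 W)) = k * (X * (q * (1 + nrm2 W))) := by
        field_simp
    _ ≤ k * (T * (nrm2 (toPlane v) + |dot2 W (perp2 (toPlane v))|)) := by
        exact mul_le_mul_of_nonneg_left (h v hv hv0) (Nat.cast_nonneg k)
    _ = T * n * (1 + |β|) := by
        rw [mul_left_comm, mul_add, ← hnv, ← hβv]
        ring
    _ ≤ T * T * (1 + |β|) := by gcongr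
    _ = T ^ 2 * (1 + |β|) := by ring

lemma kOf_mul_div_le_one (hX : 1 ≤ X) : kOf r q * q / T ^ 2 ≤ 1 := by
  have hW := nrm2_nonneg W
  refine le_of_mul_le_mul_right ?_ (by linarith : 0 < 1 + nrm2 W)
  calc kOf r q * q / T ^ 2 * (1 + nrm2 W) ≤ X * (kOf r q * q / T ^ 2) * (1 + nrm2 W) := by
        gcongr
        exact le_mul_of_one_le_left (by positivity) hX
    _ ≤ 1 + |(reflect2 (toPlane r) W).2| :=
        h.mul_kOf_mul_le ha hT hr hr0 hrT
    _ ≤ 1 * (1 + nrm2 W) := by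
        rw [one_mul, ← nrm2_reflect2 (toPlane_ne_zero hr0) W]
        gcongr
        exact abs_snd_le_nrm2 _

lemma kOf_mul_div_mul_le_inv (hX : 0 < X) :
    kOf r q * q / T ^ 2 *
      ((1 + |(reflect2 (toPlane r) W).1|) / (1 + |(reflect2 (toPlane r) W).2|)) ≤ X⁻¹ := by
  have hle := h.mul_kOf_mul_le ha hT hr hr0 hrT
  have hfst := abs_fst_le_nrm2 (reflect2 (toPlane r) W)
  rw [nrm2_reflect2 (toPlane_ne_zero hr0)] at hfst
  rw [← mul_div_assoc, div_le_iff₀ (by positivity), inv_mul_eq_div, le_div_iff₀' hX, ← mul_assoc]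
  exact hle.trans' (by gcongr)

end LatticeGap

lemma mainTerm_inv_smul (ω ω₀ : ℝ → ℝ) {T : ℝ} (hT : 0 < T) (W z : ℝ × ℝ) :
    mainTerm ω ω₀ W (T⁻¹ • z) = ω (nrm2 z / T) *
      (((nrm2 z / T)⁻¹ : ℝ) * fourierW0 ω₀ (reflect2 z W).2) := by
  have hnorm : nrm2 (T⁻¹ • z) = nrm2 z / T := by
    rw [nrm2_smul, abs_of_pos (inv_pos.2 hT), inv_mul_eq_div]
  rw [mainTerm, hnorm, perp2_smul, dot2_smul_right, inv_mul_eq_div T (dot2 W (perp2 z)),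
    div_div_div_cancel_right₀ hT.ne', reflect2, Complex.ofReal_mul]
  ring

lemma mainTerm_inv_smul_eq_zero {ω : ℝ → ℝ} (ω₀ : ℝ → ℝ) {T : ℝ} (hT : 0 < T) (W : ℝ × ℝ)
    {z : ℝ × ℝ} (hz : ω (nrm2 z / T) = 0) : mainTerm ω ω₀ W (T⁻¹ • z) = 0 := by
  rw [mainTerm_inv_smul ω ω₀ hT, hz, Complex.ofReal_zero, zero_mul]

lemma integral_mainTerm_scaled (ω ω₀ : ℝ → ℝ) {T : ℝ} (hT : 0 < T) (w : ℝ × ℝ) :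
    ∫ t, ((nrm2 t)⁻¹ * ω (nrm2 t / T) : ℝ) * fourierW0 ω₀ (T ^ 3 / nrm2 t * dot2 w (perp2 t)) =
      T * ∫ τ, mainTerm ω ω₀ (T ^ 3 • w) τ := by
  have hpoint : ∀ t, (((nrm2 t)⁻¹ * ω (nrm2 t / T) : ℝ) : ℂ) *
      fourierW0 ω₀ (T ^ 3 / nrm2 t * dot2 w (perp2 t)) =
        (T⁻¹ : ℝ) * mainTerm ω ω₀ (T ^ 3 • w) (T⁻¹ • t) := fun t => by
    rw [mainTerm_inv_smul ω ω₀ hT, reflect2_smul, Prod.smul_snd, smul_eq_mul, reflect2,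
      div_mul_eq_mul_div, ← mul_div_assoc, ← mul_assoc,
      ← mul_assoc, ← Complex.ofReal_mul, ← Complex.ofReal_mul, inv_div]
    congr 2
    field_simp
  have hscale := Measure.integral_comp_inv_smul volume (mainTerm ω ω₀ (T ^ 3 • w)) T
  rw [show Module.finrank ℝ (ℝ × ℝ) = 2 by simp, abs_of_pos (by positivity)] at hscale
  simp only [hpoint]
  rw [integral_const_mul, hscale, Complex.real_smul, ← mul_assoc, ← Complex.ofReal_mul]
  congr 2
  field_simp

lemma card_Icc_product_Icc_le {T : ℝ} (hT : 1 ≤ T) :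
    ((Finset.Icc (-⌊T⌋) ⌊T⌋ ×ˢ Finset.Icc (-⌊T⌋) ⌊T⌋).card : ℝ) ≤ 9 * T ^ 2 := by
  have hfloor : (0 : ℤ) ≤ ⌊T⌋ := Int.floor_nonneg.2 (by linarith)
  have hcard : ((Finset.Icc (-⌊T⌋) ⌊T⌋).card : ℝ) = 2 * ⌊T⌋ + 1 := by
    rw [Int.card_Icc, ← Int.cast_natCast, Int.toNat_of_nonneg (by linarith)]
    push_cast
    ring
  rw [Finset.card_product, Nat.cast_mul, hcard, ← sq]
  calc (2 * (⌊T⌋ : ℝ) + 1) ^ 2 ≤ (3 * T) ^ 2 := by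
        have := Int.floor_le T
        gcongr
        linarith
    _ = 9 * T ^ 2 := by ring

lemma norm_tsum_sub_tsum_le_of_vanishing {f g : ℤ × ℤ → ℂ} {T B : ℝ} (hT : 1 ≤ T)
    (hf : ∀ r, T < nrm2 (toPlane r) → f r = 0) (hg : ∀ r, T < nrm2 (toPlane r) → g r = 0)
    (hB : ∀ r, ‖f r - g r‖ ≤ B) : ‖∑' r, f r - ∑' r, g r‖ ≤ 9 * T ^ 2 * B := by
  have hB0 : 0 ≤ B := (norm_nonneg _).trans (hB 0)
  have hout : ∀ r ∉ Finset.Icc (-⌊T⌋) ⌊T⌋ ×ˢ Finset.Icc (-⌊T⌋) ⌊T⌋, T < nrm2 (toPlane r) := by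
    intro r hr
    by_contra! h
    have hmem : ∀ z : ℤ, |(z : ℝ)| ≤ T → z ∈ Finset.Icc (-⌊T⌋) ⌊T⌋ := fun z hz => by
      rwa [Finset.mem_Icc, ← abs_le, Int.le_floor, Int.cast_abs]
    exact hr (Finset.mem_product.2 ⟨hmem _ ((abs_fst_le_nrm2 _).trans h),
      hmem _ ((abs_snd_le_nrm2 _).trans h)⟩)
  rw [tsum_eq_sum fun r hr => hf r (hout r hr), tsum_eq_sum fun r hr => hg r (hout r hr),
    ← Finset.sum_sub_distrib]
  refine (norm_sum_le_of_le _ fun r _ => hB r).trans ?_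
  rw [Finset.sum_const, nsmul_eq_mul]
  gcongr
  exact card_Icc_product_Icc_le hT

section Asymptotic

variable {ω ω₀ : ℝ → ℝ} (hω : ContDiff ℝ (⊤ : ℕ∞) ω)
  (hω_supp : Function.support ω ⊆ Set.Ioo (1 / 2 : ℝ) 1) (hω_int : ∫ t, ω t = 1)
  (hω₀ : ContDiff ℝ (⊤ : ℕ∞) ω₀) (hω₀_even : ω₀.Even)
  (hω₀_supp : Function.support ω₀ ⊆ Set.Ioo (-(1 / 2) : ℝ) (1 / 2)) (N : ℕ)

include hω hω_supp hω_int hω₀ hω₀_even hω₀_supp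

theorem exists_norm_p2_sub_le :
    ∃ K, 0 ≤ K ∧ ∀ (T X : ℝ) (q : ℕ) [NeZero q] (a : ℤ × ℤ) (w : ℝ × ℝ), 1 ≤ T → 1 ≤ X →
      Nat.gcd (Int.gcd a.1 a.2) q = 1 → LatticeGap T X q a (T ^ 3 • w) →
      ∀ r ∈ Lambda a q, r ≠ 0 → T / 2 ≤ nrm2 (toPlane r) → nrm2 (toPlane r) ≤ T →
      ‖p2 ω ω₀ (T ^ 2) r (kOf r q) q w - cConst ω *
          (((nrm2 (toPlane r) / T)⁻¹ : ℝ) *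
            fourierW0 ω₀ (reflect2 (toPlane r) (T ^ 3 • w)).2)‖ ≤ K * T ^ 6 / X ^ N := by
  obtain ⟨K, hK, hKle⟩ := exists_norm_fourier2_radial_mul_hFun_sub_le hω_supp hω hω_int hω₀
    hω₀_even hω₀_supp N
  refine ⟨|cConst ω| * K, by positivity, fun T X q _ a w hT hX ha hgap r hr hr0 hrT hrT' => ?_⟩
  have hT0 : 0 < T := zero_lt_one.trans_le hT
  have hX0 : 0 < X := zero_lt_one.trans_le hX
  have hkq : (1 : ℝ) ≤ kOf r q * q :=
    mod_cast one_le_mul_of_one_le_of_one_le (one_le_kOf hr0 q) (NeZero.one_le (n := q))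
  have hy1 := hgap.kOf_mul_div_le_one ha hT0 hr hr0 hrT' hX
  have hyA := hgap.kOf_mul_div_mul_le_inv ha hT0 hr hr0 hrT' hX0
  set y : ℝ := kOf r q * q / T ^ 2
  set η := reflect2 (toPlane r) (T ^ 3 • w)
  have hy0 : 0 < y := by positivity
  have hyT : y⁻¹ ≤ T ^ 2 := by
    rw [inv_div]
    exact div_le_self (by positivity) hkq
  rw [p2_eq_fourier2 ω ω₀ hT0 hr0, ← mul_sub, norm_mul, Complex.norm_real, Real.norm_eq_abs,
    mul_assoc |cConst ω|, mul_div_assoc |cConst ω|]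
  refine mul_le_mul_of_nonneg_left ((hKle _ y η (by rw [le_div_iff₀ hT0]; linarith)
    ((div_le_one hT0).2 hrT') hy0 hy1).trans ?_) (abs_nonneg _)
  calc K * ((1 + |η.1|) / (1 + |η.2|)) ^ (N + 2) * (y ^ N / y) =
        K * ((y * ((1 + |η.1|) / (1 + |η.2|))) ^ (N + 2) * (y⁻¹) ^ 3) := by
        rw [mul_pow, pow_add y N 2]
        field_simp
    _ ≤ K * ((X⁻¹) ^ (N + 2) * (T ^ 2) ^ 3) := by gcongr
    _ ≤ K * ((X⁻¹) ^ N * (T ^ 2) ^ 3) := by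
        gcongr K * (?_ * _)
        exact pow_le_pow_of_le_one (by positivity) (inv_le_one_of_one_le₀ hX) (by omega)
    _ = K * T ^ 6 / X ^ N := by
        rw [inv_pow]
        field_simp

theorem exists_norm_indicator_p2_sub_indicator_mainTerm_le :
    ∃ C, 0 ≤ C ∧ ∀ (T X : ℝ) (q : ℕ) [NeZero q] (a : ℤ × ℤ) (w : ℝ × ℝ), 1 ≤ T → 1 ≤ X →
      Nat.gcd (Int.gcd a.1 a.2) q = 1 → LatticeGap T X q a (T ^ 3 • w) → ∀ r : ℤ × ℤ,
      ‖{r | r ∈ Lambda a q ∧ r ≠ 0}.indicator (fun r => (ω (nrm2 (toPlane r) / T) : ℂ) *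
            p2 ω ω₀ (T ^ 2) r (kOf r q) q w) r -
          cConst ω * (Lambda a q).indicator
            (fun r => mainTerm ω ω₀ (T ^ 3 • w) (T⁻¹ • toPlane r)) r‖ ≤ C * T ^ 6 / X ^ N := by
  obtain ⟨K, hK, hKle⟩ :=
    exists_norm_p2_sub_le hω hω_supp hω_int hω₀ hω₀_even hω₀_supp N
  obtain ⟨B, hB⟩ := (hasCompactSupport_of_support_subset_Ioo hω_supp).exists_bound_of_continuous
    hω.continuous
  have hB0 : 0 ≤ B := (norm_nonneg _).trans (hB 0)
  refine ⟨B * K, by positivity, fun T X q _ a w hT hX ha hgap r => ?_⟩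
  have hT0 : 0 < T := zero_lt_one.trans_le hT
  have : 0 < X := zero_lt_one.trans_le hX
  by_cases hz : r ∈ Lambda a q ∧ ω (nrm2 (toPlane r) / T) ≠ 0
  · obtain ⟨hr, hωr⟩ := hz
    have hrT : T / 2 ≤ nrm2 (toPlane r) := by
      linarith [(lt_div_iff₀ hT0).1 (hω_supp hωr).1]
    have hr0 : r ≠ 0 := by
      rintro rfl
      rw [show toPlane 0 = 0 by simp, nrm2_zero] at hrT
      linarith
    have hmem : r ∈ {r | r ∈ Lambda a q ∧ r ≠ 0} := ⟨hr, hr0⟩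
    rw [Set.indicator_of_mem hmem, Set.indicator_of_mem hr, mainTerm_inv_smul ω ω₀ hT0,
      mul_left_comm, ← mul_sub, norm_mul, Complex.norm_real, mul_assoc B, mul_div_assoc B]
    exact mul_le_mul (hB _) (hKle T X q a w hT hX ha hgap r hr hr0 hrT
      ((div_lt_one hT0).1 (hω_supp hωr).2).le) (norm_nonneg _) hB0
  · have hzero : r ∈ Lambda a q → ω (nrm2 (toPlane r) / T) = 0 := by simpa using hz
    rw [Set.indicator_apply_eq_zero.2 fun hr => by rw [hzero hr.1, Complex.ofReal_zero, zero_mul],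
      Set.indicator_apply_eq_zero (a := r).2 fun hr =>
        mainTerm_inv_smul_eq_zero ω₀ hT0 _ (hzero hr), mul_zero, sub_zero, norm_zero]
    positivity

theorem exists_norm_tsum_p2_sub_tsum_mainTerm_le :
    ∃ C, 0 ≤ C ∧ ∀ (T X : ℝ) (q : ℕ) [NeZero q] (a : ℤ × ℤ) (w : ℝ × ℝ), 1 ≤ T → 1 ≤ X →
      Nat.gcd (Int.gcd a.1 a.2) q = 1 → LatticeGap T X q a (T ^ 3 • w) →
      ‖∑' r, {r | r ∈ Lambda a q ∧ r ≠ 0}.indicator (fun r => (ω (nrm2 (toPlane r) / T) : ℂ) *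
            p2 ω ω₀ (T ^ 2) r (kOf r q) q w) r -
          cConst ω * ∑' r : Lambda a q, mainTerm ω ω₀ (T ^ 3 • w) (T⁻¹ • toPlane r)‖ ≤
        C * T ^ 8 / X ^ N := by
  obtain ⟨C, hC, hle⟩ := exists_norm_indicator_p2_sub_indicator_mainTerm_le hω hω_supp hω_int
    hω₀ hω₀_even hω₀_supp N
  refine ⟨9 * C, by positivity, fun T X q _ a w hT hX ha hgap => ?_⟩
  have hT0 : 0 < T := zero_lt_one.trans_le hT
  have hω_large : ∀ r : ℤ × ℤ, T < nrm2 (toPlane r) → ω (nrm2 (toPlane r) / T) = 0 :=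
    fun r hr => eq_zero_of_one_le hω_supp ((one_le_div hT0).2 hr.le)
  rw [tsum_subtype (Lambda a q) fun r => mainTerm ω ω₀ (T ^ 3 • w) (T⁻¹ • toPlane r),
    ← tsum_mul_left]
  refine (norm_tsum_sub_tsum_le_of_vanishing hT (fun r hr => ?_) (fun r hr => ?_)
    (hle T X q a w hT hX ha hgap)).trans_eq (by ring)
  · refine Set.indicator_apply_eq_zero.2 fun _ => ?_
    rw [hω_large r hr, Complex.ofReal_zero, zero_mul]
  · exact mul_eq_zero_of_right _ (Set.indicator_apply_eq_zero.2 fun _ =>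
      mainTerm_inv_smul_eq_zero ω₀ hT0 _ (hω_large r hr))

theorem exists_norm_tsum_p2_sub_integral_le :
    ∃ C, 0 ≤ C ∧ ∀ (T X : ℝ) (q : ℕ) [NeZero q] (a : ℤ × ℤ) (w : ℝ × ℝ), 1 ≤ T → 1 ≤ X →
      Nat.gcd (Int.gcd a.1 a.2) q = 1 →
      X * (q * (T ^ 2)⁻¹ + nrm2 w * q * T) ≤ muM (T ^ 2) w a q →
      ‖∑' r, {r | r ∈ Lambda a q ∧ r ≠ 0}.indicator (fun r => (ω (nrm2 (toPlane r) / T) : ℂ) *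
            p2 ω ω₀ (T ^ 2) r (kOf r q) q w) r -
          (cConst ω * T / q : ℝ) * ∫ t, ((nrm2 t)⁻¹ * ω (nrm2 t / T) : ℝ) *
            fourierW0 ω₀ (T ^ 3 / nrm2 t * dot2 w (perp2 t))‖ ≤ C * (T ^ 8 / X ^ N) := by
  obtain ⟨C₁, hC₁, hsum⟩ := exists_norm_tsum_p2_sub_tsum_mainTerm_le hω hω_supp hω_int hω₀
    hω₀_even hω₀_supp N
  obtain ⟨C₂, hC₂, hmain⟩ := exists_norm_tsum_Lambda_mainTerm_sub_le hω hω_supp hω₀ hω₀_supp N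
  refine ⟨C₁ + |cConst ω| * C₂, by positivity, fun T X q _ a w hT hX ha hmu => ?_⟩
  have hT0 : 0 < T := zero_lt_one.trans_le hT
  have hX0 : 0 < X := zero_lt_one.trans_le hX
  have hgap := latticeGap_of_le_muM hT0 hmu
  have hfactor : ((cConst ω * T / q : ℝ) : ℂ) * (T * ∫ τ, mainTerm ω ω₀ (T ^ 3 • w) τ) =
      cConst ω * ((T ^ 2 / q : ℝ) • ∫ τ, mainTerm ω ω₀ (T ^ 3 • w) τ) := by
    rw [Complex.real_smul]
    push_cast
    ring
  rw [integral_mainTerm_scaled ω ω₀ hT0, hfactor]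
  refine (norm_sub_le_norm_sub_add_norm_sub _ (cConst ω *
    ∑' r : Lambda a q, mainTerm ω ω₀ (T ^ 3 • w) (T⁻¹ • toPlane r)) _).trans ?_
  rw [← mul_sub, norm_mul, Complex.norm_real, Real.norm_eq_abs]
  calc _ ≤ C₁ * T ^ 8 / X ^ N + |cConst ω| * (C₂ * T ^ 2 / X ^ N) := by
        gcongr
        exacts [hsum T X q a w hT hX ha hgap, hmain T X q a _ hT hX0 ha hgap]
    _ ≤ C₁ * T ^ 8 / X ^ N + |cConst ω| * (C₂ * T ^ 8 / X ^ N) := by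
        gcongr
        norm_num
    _ = (C₁ + |cConst ω| * C₂) * (T ^ 8 / X ^ N) := by ring

end Asymptotic

lemma rpow_half_pow_div_rpow_pow_le {Q δ N : ℝ} {n : ℕ} (hQ : 1 ≤ Q) (hn : N + 4 ≤ n * δ) :
    (Q ^ ((1 : ℝ) / 2)) ^ 8 / (Q ^ δ) ^ n ≤ Q ^ (-N) := by
  have hQ0 : 0 < Q := zero_lt_one.trans_le hQ
  rw [← Real.rpow_mul_natCast hQ0.le, ← Real.rpow_mul_natCast hQ0.le, ← Real.rpow_sub hQ0]
  exact Real.rpow_le_rpow_of_exponent_le hQ (by push_cast; linarith)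

theorem statement13_general
    (ω : ℝ → ℝ) (hω_smooth : ContDiff ℝ (⊤ : ℕ∞) ω)
    (hω_supp : Function.support ω ⊆ Set.Ioo (1 / 2 : ℝ) 1)
    (hω_int : ∫ x : ℝ, ω x = 1)
    (ω₀ : ℝ → ℝ) (hω₀_smooth : ContDiff ℝ (⊤ : ℕ∞) ω₀)
    (hω₀_even : ∀ x, ω₀ (-x) = ω₀ x)
    (hω₀_supp : Function.support ω₀ ⊆ Set.Ioo (-(1 / 2) : ℝ) (1 / 2))
    (δ N : ℝ) (hδ : 0 < δ) :
    ∃ C : ℝ, 0 < C ∧ ∀ Q : ℝ, 1 ≤ Q → ∀ q : ℕ, 1 ≤ q →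
      ∀ a : ℤ × ℤ, Nat.gcd (Int.gcd a.1 a.2) q = 1 →
      ∀ w : ℝ × ℝ,
        Q ^ δ * ((q : ℝ) * Q⁻¹ + nrm2 w * q * Q ^ ((1 : ℝ) / 2)) ≤ muM Q w a q →
        ‖(∑' r : ℤ × ℤ,
            Set.indicator {r : ℤ × ℤ | r ∈ Lambda a q ∧ r ≠ 0}
              (fun r => ((ω (nrm2 ((r.1 : ℝ), (r.2 : ℝ)) / Q ^ ((1 : ℝ) / 2)) : ℝ) : ℂ) *
                p2 ω ω₀ Q r (kOf r q) (q : ℝ) w) r) -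
          ((cConst ω * Q ^ ((1 : ℝ) / 2) / q : ℝ) : ℂ) *
            ∫ t : ℝ × ℝ,
              (((nrm2 t)⁻¹ * ω (nrm2 t / Q ^ ((1 : ℝ) / 2)) : ℝ) : ℂ) *
                fourierW0 ω₀ ((Q ^ ((3 : ℝ) / 2) / nrm2 t) * dot2 w (perp2 t))‖
          ≤ C * Q ^ (-N) := by
  obtain ⟨n, hn⟩ := exists_nat_ge ((N + 4) / δ)
  rw [div_le_iff₀ hδ] at hn
  obtain ⟨C, hC, hle⟩ := exists_norm_tsum_p2_sub_integral_le hω_smooth hω_supp hω_int hω₀_smooth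
    hω₀_even hω₀_supp n
  refine ⟨C + 1, by positivity, fun Q hQ q hq a ha w hmu => ?_⟩
  have : NeZero q := ⟨Nat.one_le_iff_ne_zero.1 hq⟩
  have hQ0 : 0 ≤ Q := zero_le_one.trans hQ
  have hT2 : (Q ^ ((1 : ℝ) / 2)) ^ 2 = Q := by
    rw [← Real.rpow_mul_natCast hQ0]
    norm_num
  have hT3 : (Q ^ ((1 : ℝ) / 2)) ^ 3 = Q ^ ((3 : ℝ) / 2) := by
    rw [← Real.rpow_mul_natCast hQ0]
    norm_num
  have hbound := hle (Q ^ ((1 : ℝ) / 2)) (Q ^ δ) q a w (Real.one_le_rpow hQ (by norm_num))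
    (Real.one_le_rpow hQ hδ.le) ha (by rwa [hT2])
  rw [hT2, hT3] at hbound
  exact hbound.trans (mul_le_mul (le_add_of_nonneg_right zero_le_one)
    (rpow_half_pow_div_rpow_pow_le hQ hn) (by positivity) (by positivity))

/-- asymptotic for the `r`-sum of `p_{2,r,k(r),q}` (Lemma 4.4). -/
theorem statement13
    (ω : ℝ → ℝ) (hω_smooth : ContDiff ℝ (⊤ : ℕ∞) ω)
    (hω_nonneg : ∀ x, 0 ≤ ω x)
    (hω_supp : Function.support ω ⊆ Set.Ioo (1/2 : ℝ) 1)
    (hω_int : ∫ x : ℝ, ω x = 1)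
    (ω₀ : ℝ → ℝ) (hω₀_smooth : ContDiff ℝ (⊤ : ℕ∞) ω₀)
    (hω₀_nonneg : ∀ x, 0 ≤ ω₀ x)
    (hω₀_even : ∀ x, ω₀ (-x) = ω₀ x)
    (hω₀_supp : Function.support ω₀ ⊆ Set.Ioo (-(1/2) : ℝ) (1/2))
    (hω₀_one : ω₀ 0 = 1)
    (δ N : ℝ) (hδ : 0 < δ) (hN : 0 < N) :
    ∃ C : ℝ, 0 < C ∧ ∀ Q : ℝ, 1 ≤ Q → ∀ q : ℕ, 1 ≤ q →
      ∀ a : ℤ × ℤ, Nat.gcd (Int.gcd a.1 a.2) q = 1 →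
      ∀ w : ℝ × ℝ,
        Q ^ δ * ((q : ℝ) * Q⁻¹ + nrm2 w * q * Q ^ ((1 : ℝ) / 2)) ≤ muM Q w a q →
        ‖(∑' r : ℤ × ℤ,
            Set.indicator {r : ℤ × ℤ | r ∈ Lambda a q ∧ r ≠ 0}
              (fun r => ((ω (nrm2 ((r.1 : ℝ), (r.2 : ℝ)) / Q ^ ((1 : ℝ) / 2)) : ℝ) : ℂ) *
                p2 ω ω₀ Q r (kOf r q) (q : ℝ) w) r) -
          ((cConst ω * Q ^ ((1 : ℝ) / 2) / q : ℝ) : ℂ) *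
            ∫ t : ℝ × ℝ,
              (((nrm2 t)⁻¹ * ω (nrm2 t / Q ^ ((1 : ℝ) / 2)) : ℝ) : ℂ) *
                fourierW0 ω₀ ((Q ^ ((3 : ℝ) / 2) / nrm2 t) * dot2 w (perp2 t))‖
          ≤ C * Q ^ (-N) := by
  exact statement13_general ω hω_smooth hω_supp hω_int ω₀ hω₀_smooth hω₀_even hω₀_supp δ N hδ
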